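/- arXiv:1507.05485 — 3 statements merged into one kernel-verified Lean document; each statement's English description precedes it below -/
import Mathlib

section
/- Let N ≥ 1 and Q ≥ 1 be integers, let C = [−1,1)^{2N−1}, C₊ = [0,1)^{2N−1}, and F(x) = (1+‖x‖²)^{−N} for x ∈ ℝ^{2N−1}. For any continuous nonnegative function Θ : [−1,1]^{2N−1} × [0,1]^{2N−1} → ℝ, ∫_C Θ(A_Q(x), B_Q(x)) F(x) dx ≤ exp(2 N^{3/2}/Q) ∫_{C₊} ∫_C Θ(A_Q(x), y) F(x) dx dy. -/
/-!
Cut the cube `C = [-1,1)^k`, `k = 2N - 1`, into the `(2Q)^k` cells on which `⌊Q x_j⌋ = m_j` for all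
`j`.  On such a cell `A_Q` is the constant `m / Q`, and the affine map `y ↦ (m + y) / Q` from
`C₊ = [0,1)^k` onto the cell inverts `B_Q` and scales volume by `Q^{-k}` (`setIntegral_cell`).
Hence the left side is `∑_m Q^{-k} ∫_{C₊} Θ(m/Q, y) F((m+y)/Q) dy`, while the right side, without
its factor, is `∑_m (∫_{cell m} F) ∫_{C₊} Θ(m/Q, y) dy`.

The terms compare one by one, because `F` varies at most by the factor `exp(2 N^{3/2} / Q)` within a
cell (`Fdens_le_of_close`), so that `Q^{-k} F((m+y)/Q)` is at most that factor times `∫_{cell m} F`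
(`Fdens_le_integral_cell`).
-/

open MeasureTheory

noncomputable section

/-- Truncation of a real number at precision `Q`. -/
def truncQ (Q : ℕ) (a : ℝ) : ℝ := (⌊(Q : ℝ) * a⌋ : ℤ) / (Q : ℝ)

/-- Componentwise truncation `A_Q`. -/
def AQ (Q : ℕ) {k : ℕ} (x : Fin k → ℝ) : Fin k → ℝ := fun j => truncQ Q (x j)

/-- Remaining noise `B_Q(x) = (x − A_Q(x))·Q ∈ [0,1)^k`. -/
def BQ (Q : ℕ) {k : ℕ} (x : Fin k → ℝ) : Fin k → ℝ := fun j => (x j - truncQ Q (x j)) * Q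

/-- The density `F(x) = (1 + ‖x‖²)^(−N)` (Euclidean norm). -/
def Fdens (N : ℕ) {k : ℕ} (x : Fin k → ℝ) : ℝ := ((1 + ∑ j, x j ^ 2) ^ N)⁻¹

/-- The cell of all `x` with `⌊Q x_j⌋ = m_j` for every `j`, i.e. `m / Q + [0, 1/Q)^k`. -/
def cell (Q : ℕ) {k : ℕ} (m : Fin k → ℤ) : Set (Fin k → ℝ) :=
  Set.univ.pi fun j => {t : ℝ | ⌊(Q : ℝ) * t⌋ = m j}

/-- The half-open unit cube `C₊ = [0,1)^k`. -/
def unitCube (k : ℕ) : Set (Fin k → ℝ) := Set.univ.pi fun _ => Set.Ico (0 : ℝ) 1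

/-- The corner `m / Q` of `cell Q m`. -/
def corner (Q : ℕ) {k : ℕ} (m : Fin k → ℤ) : Fin k → ℝ := fun j => (m j : ℝ) / Q

/-- The affine parametrization `y ↦ (m + y) / Q` of `cell Q m` by the unit cube. -/
def cellMap (Q : ℕ) {k : ℕ} (m : Fin k → ℤ) (y : Fin k → ℝ) : Fin k → ℝ :=
  fun j => ((m j : ℝ) + y j) / Q

lemma measurableSet_cell (Q : ℕ) {k : ℕ} (m : Fin k → ℤ) : MeasurableSet (cell Q m) := by
  refine MeasurableSet.univ_pi fun j => ?_
  exact (Int.measurable_floor.comp (measurable_const_mul (Q : ℝ))) (measurableSet_singleton (m j))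

lemma measurableSet_unitCube (k : ℕ) : MeasurableSet (unitCube k) :=
  MeasurableSet.univ_pi fun _ => measurableSet_Ico

lemma mem_cell_iff {Q k : ℕ} {m : Fin k → ℤ} {x : Fin k → ℝ} :
    x ∈ cell Q m ↔ ∀ j, ⌊(Q : ℝ) * x j⌋ = m j := by
  simp [cell]

lemma cellMap_mem_cell_iff {Q k : ℕ} (hQ : 1 ≤ Q) {m : Fin k → ℤ} {y : Fin k → ℝ} :
    cellMap Q m y ∈ cell Q m ↔ y ∈ unitCube k := by
  have hQ0 : (Q : ℝ) ≠ 0 := by positivity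
  simp only [mem_cell_iff, unitCube, Set.mem_pi, Set.mem_univ, true_imp_iff, cellMap, Set.mem_Ico]
  refine forall_congr' fun j => ?_
  rw [mul_div_cancel₀ _ hQ0, Int.floor_eq_iff]
  constructor <;> rintro ⟨h1, h2⟩ <;> constructor <;> linarith

lemma AQ_of_mem_cell {Q k : ℕ} {m : Fin k → ℤ} {x : Fin k → ℝ} (hx : x ∈ cell Q m) :
    AQ Q x = corner Q m := by
  funext j
  simp [AQ, truncQ, corner, mem_cell_iff.1 hx j]

lemma BQ_of_mem_cell {Q k : ℕ} {m : Fin k → ℤ} {x : Fin k → ℝ} (hx : x ∈ cell Q m) :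
    BQ Q x = fun j => (x j - corner Q m j) * Q := by
  funext j
  simp [BQ, truncQ, corner, mem_cell_iff.1 hx j]

lemma BQ_cellMap {Q k : ℕ} (hQ : 1 ≤ Q) {m : Fin k → ℤ} {y : Fin k → ℝ} (hy : y ∈ unitCube k) :
    BQ Q (cellMap Q m y) = y := by
  have hQ0 : (Q : ℝ) ≠ 0 := by positivity
  rw [BQ_of_mem_cell ((cellMap_mem_cell_iff hQ).2 hy)]
  funext j
  simp only [cellMap, corner]
  field_simp
  ring

/-- Change of variables on a cell.  Integrability of `g` plays no role, since both sides of a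
change of variables take the junk value `0` together. -/
lemma setIntegral_cell {Q k : ℕ} (hQ : 1 ≤ Q) (m : Fin k → ℤ) (g : (Fin k → ℝ) → ℝ) :
    ∫ x in cell Q m, g x = ((Q : ℝ) ^ k)⁻¹ * ∫ y in unitCube k, g (cellMap Q m y) := by
  have hQ0 : (0 : ℝ) < Q := by positivity
  have hmap : ∀ y : Fin k → ℝ,
      (unitCube k).indicator (fun y => g (cellMap Q m y)) y
        = (cell Q m).indicator g ((Q : ℝ)⁻¹ • (y + fun j => (m j : ℝ))) := by
    intro y
    have he : ((Q : ℝ)⁻¹ • (y + fun j => (m j : ℝ))) = cellMap Q m y := by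
      funext j
      simp [cellMap, div_eq_inv_mul, add_comm]
    rw [he]
    by_cases hy : y ∈ unitCube k
    · rw [Set.indicator_of_mem hy, Set.indicator_of_mem ((cellMap_mem_cell_iff hQ).2 hy)]
    · rw [Set.indicator_of_notMem hy,
        Set.indicator_of_notMem (fun h => hy ((cellMap_mem_cell_iff hQ).1 h))]
  rw [← integral_indicator (measurableSet_cell Q m),
    ← integral_indicator (measurableSet_unitCube k)]
  simp_rw [hmap]
  rw [integral_add_right_eq_self (μ := volume)
      (fun y : Fin k → ℝ => (cell Q m).indicator g ((Q : ℝ)⁻¹ • y)),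
    Measure.integral_comp_smul]
  have : |(((Q : ℝ)⁻¹) ^ Module.finrank ℝ (Fin k → ℝ))⁻¹| = (Q : ℝ) ^ k := by
    rw [Module.finrank_fin_fun, inv_pow, inv_inv, abs_of_nonneg (by positivity)]
  rw [this, smul_eq_mul, ← mul_assoc, inv_mul_cancel₀ (by positivity), one_mul]

/-- The finitely many indices `m` whose cells make up `[-1,1)^k`. -/
def cellIdx (Q k : ℕ) : Finset (Fin k → ℤ) :=
  Fintype.piFinset fun _ => Finset.Ico (-(Q : ℤ)) Q

lemma cube_eq_biUnion {Q : ℕ} (k : ℕ) (hQ : 1 ≤ Q) :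
    (Set.univ.pi fun _ : Fin k => Set.Ico (-1 : ℝ) 1) = ⋃ m ∈ cellIdx Q k, cell Q m := by
  have hQ0 : (0 : ℝ) < Q := by positivity
  have key : ∀ t : ℝ, t ∈ Set.Ico (-1 : ℝ) 1 ↔ ⌊(Q : ℝ) * t⌋ ∈ Finset.Ico (-(Q : ℤ)) Q := by
    intro t
    rw [Finset.mem_Ico, Int.le_floor, Int.floor_lt, Set.mem_Ico]
    push_cast
    constructor <;> rintro ⟨h1, h2⟩ <;> constructor <;> nlinarith
  ext x
  simp only [Set.mem_pi, Set.mem_univ, true_imp_iff, Set.mem_iUnion, exists_prop, mem_cell_iff,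
    cellIdx, Fintype.mem_piFinset, key]
  constructor
  · intro h
    exact ⟨fun j => ⌊(Q : ℝ) * x j⌋, h, fun _ => rfl⟩
  · rintro ⟨m, hm, h⟩ j
    rw [h j]
    exact hm j

lemma pairwiseDisjoint_cell (Q k : ℕ) :
    Set.Pairwise (↑(cellIdx Q k)) (Function.onFun Disjoint fun m : Fin k → ℤ => cell Q m) := by
  intro m _ m' _ hne
  refine Set.disjoint_left.2 fun x hx hx' => hne ?_
  funext j
  rw [← mem_cell_iff.1 hx j, mem_cell_iff.1 hx' j]

lemma corner_mem {Q k : ℕ} (hQ : 1 ≤ Q) {m : Fin k → ℤ} (hm : m ∈ cellIdx Q k) :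
    corner Q m ∈ Set.univ.pi fun _ : Fin k => Set.Icc (-1 : ℝ) 1 := by
  have hQ0 : (0 : ℝ) < Q := by positivity
  intro j _
  obtain ⟨h1, h2⟩ := Finset.mem_Ico.1 (Fintype.mem_piFinset.1 hm j)
  have h1' : (-(Q : ℝ)) ≤ m j := by exact_mod_cast h1
  have h2' : (m j : ℝ) ≤ Q := by exact_mod_cast h2.le
  simp only [corner, Set.mem_Icc]
  rw [le_div_iff₀ hQ0, div_le_iff₀ hQ0]
  constructor <;> linarith

lemma unitCube_subset (k : ℕ) :
    unitCube k ⊆ Set.univ.pi fun _ : Fin k => Set.Icc (0 : ℝ) 1 :=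
  Set.pi_mono fun _ _ => Set.Ico_subset_Icc_self

lemma isCompact_closedCube (k : ℕ) :
    IsCompact (Set.univ.pi fun _ : Fin k => Set.Icc (0 : ℝ) 1) :=
  isCompact_univ_pi fun _ => isCompact_Icc

/-- A cell lies in a compact box, to which continuity of integrands extends. -/
lemma cell_subset_Icc {Q k : ℕ} (hQ : 1 ≤ Q) (m : Fin k → ℤ) :
    cell Q m ⊆ Set.Icc (corner Q m) (fun j => ((m j : ℝ) + 1) / Q) := by
  have hQ0 : (0 : ℝ) < Q := by positivity
  intro x hx
  rw [mem_cell_iff] at hx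
  refine ⟨fun j => ?_, fun j => ?_⟩ <;> obtain ⟨h1, h2⟩ := Int.floor_eq_iff.1 (hx j)
  · simp only [corner]
    rw [div_le_iff₀ hQ0]
    linarith
  · simp only
    rw [le_div_iff₀ hQ0]
    linarith

lemma continuous_Fdens (N k : ℕ) : Continuous (Fdens N : (Fin k → ℝ) → ℝ) := by
  unfold Fdens
  refine Continuous.inv₀ (by fun_prop) fun x => ?_
  have : 0 ≤ ∑ j, x j ^ 2 := Finset.sum_nonneg fun j _ => sq_nonneg _
  positivity

lemma Fdens_pos (N : ℕ) {k : ℕ} (x : Fin k → ℝ) : 0 < Fdens N x := by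
  have : 0 ≤ ∑ j, x j ^ 2 := Finset.sum_nonneg fun j _ => sq_nonneg _
  unfold Fdens
  positivity

/-- Two points whose coordinates differ by at most `1 / Q` have densities within the factor
`exp(2 N^{3/2} / Q)`.  With `c = 2 √N / Q` the squared distance is at most `c² / 2`, which gives
`1 + ‖z‖² ≤ (1 + ‖x‖²) (1 + c + c² / 2) ≤ (1 + ‖x‖²) e^c`. -/
lemma Fdens_le_of_close {N Q k : ℕ} (hN : 1 ≤ N) (hQ : 1 ≤ Q) (hk : k ≤ 2 * N)
    (x z : Fin k → ℝ) (h : ∀ j, |z j - x j| ≤ 1 / Q) :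
    Fdens N x ≤ Real.exp (2 * (N : ℝ) ^ (3 / 2 : ℝ) / Q) * Fdens N z := by
  have hQ0 : (0 : ℝ) < Q := by positivity
  have hN0 : (0 : ℝ) < N := by positivity
  set c : ℝ := 2 * √N / Q with hc
  have hc0 : 0 < c := by positivity
  have hS : 0 ≤ ∑ j, x j ^ 2 := Finset.sum_nonneg fun j _ => sq_nonneg _
  have hS' : 0 ≤ ∑ j, z j ^ 2 := Finset.sum_nonneg fun j _ => sq_nonneg _
  have hD : ∑ j, (z j - x j) ^ 2 ≤ c ^ 2 / 2 := by
    have h1 : ∑ j, (z j - x j) ^ 2 ≤ ∑ _j : Fin k, (1 / (Q : ℝ)) ^ 2 :=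
      Finset.sum_le_sum fun j _ => sq_le_sq' (abs_le.1 (h j)).1 (abs_le.1 (h j)).2
    have hkN : (k : ℝ) ≤ 2 * N := by exact_mod_cast hk
    have h2 : c ^ 2 / 2 = (2 * N) * (1 / (Q : ℝ)) ^ 2 := by
      rw [hc, div_pow, mul_pow, Real.sq_sqrt hN0.le]
      ring
    rw [h2]
    refine h1.trans ?_
    rw [Finset.sum_const, Finset.card_univ, Fintype.card_fin, nsmul_eq_mul]
    gcongr
  -- weighted AM-GM in each coordinate: `2 a b ≤ c a² + b² / c`
  have hz : ∑ j, z j ^ 2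
      ≤ (1 + c) * ∑ j, x j ^ 2 + (1 + 1 / c) * ∑ j, (z j - x j) ^ 2 := by
    rw [Finset.mul_sum, Finset.mul_sum, ← Finset.sum_add_distrib]
    refine Finset.sum_le_sum fun j _ => ?_
    have hsq : 0 ≤ (c * x j - (z j - x j)) ^ 2 / c := by positivity
    have he : (c * x j - (z j - x j)) ^ 2 / c
        = c * x j ^ 2 - 2 * x j * (z j - x j) + 1 / c * (z j - x j) ^ 2 := by
      field_simp
      ring
    rw [he] at hsq
    nlinarith
  have hD' : (1 + 1 / c) * ∑ j, (z j - x j) ^ 2 ≤ c ^ 2 / 2 + c / 2 := by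
    calc (1 + 1 / c) * ∑ j, (z j - x j) ^ 2 ≤ (1 + 1 / c) * (c ^ 2 / 2) := by gcongr
      _ = c ^ 2 / 2 + c / 2 := by field_simp
  have hexp : 1 + c + c ^ 2 / 2 ≤ Real.exp c := Real.quadratic_le_exp_of_nonneg hc0.le
  have hmain : 1 + ∑ j, z j ^ 2 ≤ Real.exp c * (1 + ∑ j, x j ^ 2) := by
    have h1 : (1 + c + c ^ 2 / 2) * (1 + ∑ j, x j ^ 2)
        ≤ Real.exp c * (1 + ∑ j, x j ^ 2) := by gcongr
    have h2 : 0 ≤ c ^ 2 / 2 * ∑ j, x j ^ 2 := by positivity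
    nlinarith
  have hpow : Real.exp (2 * (N : ℝ) ^ (3 / 2 : ℝ) / Q) = Real.exp c ^ N := by
    rw [← Real.exp_nat_mul, hc, show (3 / 2 : ℝ) = 1 + 1 / 2 by norm_num, Real.rpow_add hN0,
      Real.rpow_one, Real.sqrt_eq_rpow]
    congr 1
    ring
  have hmN : (1 + ∑ j, z j ^ 2) ^ N ≤ Real.exp c ^ N * (1 + ∑ j, x j ^ 2) ^ N := by
    rw [← mul_pow]
    exact pow_le_pow_left₀ (by positivity) hmain N
  unfold Fdens
  rw [hpow, ← div_eq_mul_inv, le_div_iff₀ (by positivity), inv_mul_le_iff₀ (by positivity)]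
  linarith

lemma integrableOn_Fdens_cell (N : ℕ) {Q k : ℕ} (hQ : 1 ≤ Q) (m : Fin k → ℤ) :
    IntegrableOn (Fdens N) (cell Q m) :=
  ((continuous_Fdens N k).continuousOn.integrableOn_compact isCompact_Icc).mono_set
    (cell_subset_Icc hQ m)

lemma volume_real_unitCube (k : ℕ) : volume.real (unitCube k) = 1 := by
  simp [unitCube, Measure.real, volume_pi_pi]

/-- The cell has volume `Q^{-k}`, and `F` is almost constant on it. -/
lemma Fdens_le_integral_cell {N Q k : ℕ} (hN : 1 ≤ N) (hQ : 1 ≤ Q) (hk : k ≤ 2 * N)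
    (m : Fin k → ℤ) {y : Fin k → ℝ} (hy : y ∈ unitCube k) :
    ((Q : ℝ) ^ k)⁻¹ * Fdens N (cellMap Q m y)
      ≤ Real.exp (2 * (N : ℝ) ^ (3 / 2 : ℝ) / Q) * ∫ x in cell Q m, Fdens N x := by
  have hQ0 : (0 : ℝ) < Q := by positivity
  rw [setIntegral_cell hQ, mul_left_comm]
  refine mul_le_mul_of_nonneg_left ?_ (by positivity)
  rw [← integral_const_mul]
  have hfin : volume (unitCube k) ≠ ⊤ :=
    ((isCompact_closedCube k).measure_lt_top.trans_le' (measure_mono (unitCube_subset k))).ne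
  have hconst : Fdens N (cellMap Q m y)
      = ∫ _ in unitCube k, Fdens N (cellMap Q m y) := by
    rw [setIntegral_const, volume_real_unitCube, one_smul]
  rw [hconst]
  have hcont : Continuous (cellMap Q m) := by
    unfold cellMap
    fun_prop
  refine setIntegral_mono_on (integrableOn_const hfin) ?_ (measurableSet_unitCube k) ?_
  · refine IntegrableOn.mono_set ?_ (unitCube_subset k)
    exact ((continuous_const.mul ((continuous_Fdens N k).comp hcont)).continuousOn
      ).integrableOn_compact (isCompact_closedCube k)
  · intro z hz
    refine Fdens_le_of_close hN hQ hk _ _ fun j => ?_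
    obtain ⟨hy0, hy1⟩ := hy j (Set.mem_univ j)
    obtain ⟨hz0, hz1⟩ := hz j (Set.mem_univ j)
    simp only [cellMap]
    rw [← sub_div, abs_div, abs_of_pos hQ0]
    gcongr
    rw [abs_le]
    constructor <;> linarith

/-- Derandomization estimate for the cube: for continuous nonnegative
`Θ : [−1,1]^(2N−1) × [0,1]^(2N−1) → ℝ`,
`∫_C Θ(A_Q x, B_Q x) F(x) dx ≤ exp(2 N^(3/2)/Q) ∫_{C₊} ∫_C Θ(A_Q x, y) F(x) dx dy`. -/
theorem truncation_noise_integral (N Q : ℕ) (hN : 1 ≤ N) (hQ : 1 ≤ Q)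
    (Θ : (Fin (2 * N - 1) → ℝ) → (Fin (2 * N - 1) → ℝ) → ℝ)
    (hΘcont : ContinuousOn (fun p : (Fin (2 * N - 1) → ℝ) × (Fin (2 * N - 1) → ℝ) => Θ p.1 p.2)
      ((Set.univ.pi fun _ => Set.Icc (-1 : ℝ) 1) ×ˢ (Set.univ.pi fun _ => Set.Icc (0 : ℝ) 1)))
    (hΘnonneg : ∀ x ∈ Set.univ.pi fun _ : Fin (2 * N - 1) => Set.Icc (-1 : ℝ) 1,
      ∀ y ∈ Set.univ.pi fun _ : Fin (2 * N - 1) => Set.Icc (0 : ℝ) 1, 0 ≤ Θ x y) :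
    ∫ x in Set.univ.pi fun _ : Fin (2 * N - 1) => Set.Ico (-1 : ℝ) 1,
        Θ (AQ Q x) (BQ Q x) * Fdens N x
      ≤ Real.exp (2 * (N : ℝ) ^ (3 / 2 : ℝ) / Q) *
        ∫ y in Set.univ.pi fun _ : Fin (2 * N - 1) => Set.Ico (0 : ℝ) 1,
          ∫ x in Set.univ.pi fun _ : Fin (2 * N - 1) => Set.Ico (-1 : ℝ) 1,
            Θ (AQ Q x) y * Fdens N x := by
  have hk : 2 * N - 1 ≤ 2 * N := Nat.sub_le _ _
  have hQ0 : (0 : ℝ) < Q := by positivity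
  generalize 2 * N - 1 = k at *
  have hΘslice : ∀ m ∈ cellIdx Q k, ContinuousOn (Θ (corner Q m))
      (Set.univ.pi fun _ => Set.Icc (0 : ℝ) 1) := fun m hm =>
    hΘcont.comp (f := fun y => (corner Q m, y)) (by fun_prop)
      fun y hy => Set.mk_mem_prod (corner_mem hQ hm) hy
  have hΘint : ∀ m ∈ cellIdx Q k, IntegrableOn (Θ (corner Q m)) (unitCube k) := fun m hm =>
    ((hΘslice m hm).integrableOn_compact (isCompact_closedCube k)).mono_set (unitCube_subset k)
  have hleft : ∫ x in Set.univ.pi fun _ : Fin k => Set.Ico (-1 : ℝ) 1,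
        Θ (AQ Q x) (BQ Q x) * Fdens N x
      = ∑ m ∈ cellIdx Q k, ((Q : ℝ) ^ k)⁻¹ *
          ∫ y in unitCube k, Θ (corner Q m) y * Fdens N (cellMap Q m y) := by
    rw [cube_eq_biUnion k hQ, integral_biUnion_finset _ (fun m _ => measurableSet_cell Q m)
      (pairwiseDisjoint_cell Q k)]
    · refine Finset.sum_congr rfl fun m _ => ?_
      rw [setIntegral_cell hQ]
      congr 1
      refine setIntegral_congr_fun (measurableSet_unitCube k) fun y hy => ?_
      rw [BQ_cellMap hQ hy, AQ_of_mem_cell ((cellMap_mem_cell_iff hQ).2 hy)]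
    · intro m hm
      -- on the cell the integrand agrees with a function continuous on the closed cell
      have hcont : ContinuousOn
          (fun x => Θ (corner Q m) (fun j => (x j - corner Q m j) * Q) * Fdens N x)
          (Set.Icc (corner Q m) (fun j => ((m j : ℝ) + 1) / Q)) := by
        refine ContinuousOn.mul ?_ (continuous_Fdens N k).continuousOn
        refine (hΘslice m hm).comp (f := fun (x : Fin k → ℝ) j => (x j - corner Q m j) * (Q : ℝ))
          (by fun_prop) ?_
        rintro x ⟨h1, h2⟩ j -
        have h1 := h1 j
        have h2 := h2 j
        simp only [corner] at h1 h2 ⊢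
        refine ⟨mul_nonneg (by linarith) hQ0.le, ?_⟩
        rw [← le_div_iff₀ hQ0]
        rw [add_div] at h2
        linarith
      refine ((hcont.integrableOn_compact isCompact_Icc).mono_set
        (cell_subset_Icc hQ m)).congr_fun (fun x hx => ?_) (measurableSet_cell Q m)
      simp only
      rw [AQ_of_mem_cell hx, BQ_of_mem_cell hx]
  have hinner : ∀ y, ∫ x in Set.univ.pi fun _ : Fin k => Set.Ico (-1 : ℝ) 1,
        Θ (AQ Q x) y * Fdens N x
      = ∑ m ∈ cellIdx Q k, Θ (corner Q m) y * ∫ x in cell Q m, Fdens N x := by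
    intro y
    have hcell : ∀ m : Fin k → ℤ, Set.EqOn (fun x => Θ (corner Q m) y * Fdens N x)
        (fun x => Θ (AQ Q x) y * Fdens N x) (cell Q m) := fun m x hx => by
      simp only
      rw [AQ_of_mem_cell hx]
    rw [cube_eq_biUnion k hQ, integral_biUnion_finset _ (fun m _ => measurableSet_cell Q m)
      (pairwiseDisjoint_cell Q k)]
    · refine Finset.sum_congr rfl fun m _ => ?_
      rw [← integral_const_mul]
      exact (setIntegral_congr_fun (measurableSet_cell Q m) (hcell m)).symm
    · intro m _
      exact IntegrableOn.congr_fun (Integrable.const_mul (integrableOn_Fdens_cell N hQ m) _)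
        (hcell m) (measurableSet_cell Q m)
  have hright : ∫ y in Set.univ.pi fun _ : Fin k => Set.Ico (0 : ℝ) 1,
        ∫ x in Set.univ.pi fun _ : Fin k => Set.Ico (-1 : ℝ) 1, Θ (AQ Q x) y * Fdens N x
      = ∑ m ∈ cellIdx Q k, ∫ y in unitCube k,
          Θ (corner Q m) y * ∫ x in cell Q m, Fdens N x := by
    simp_rw [hinner]
    exact integral_finsetSum _ fun m hm => Integrable.mul_const (hΘint m hm) _
  rw [hleft, hright, Finset.mul_sum]
  refine Finset.sum_le_sum fun m hm => ?_
  rw [← integral_const_mul, ← integral_const_mul]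
  have hcm : Continuous (cellMap Q m) := by
    unfold cellMap
    fun_prop
  refine setIntegral_mono_on ?_ ?_ (measurableSet_unitCube k) fun y hy => ?_
  · refine Integrable.const_mul ?_ _
    exact ((((hΘslice m hm).mul ((continuous_Fdens N k).comp hcm).continuousOn
      ).integrableOn_compact (isCompact_closedCube k)).mono_set (unitCube_subset k))
  · exact Integrable.const_mul (Integrable.mul_const (hΘint m hm) _) _
  · have h0 := hΘnonneg _ (corner_mem hQ hm) y (unitCube_subset k hy)
    have h1 := mul_le_mul_of_nonneg_left (Fdens_le_integral_cell hN hQ hk m hy) h0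
    linarith
end
end

section
/- Let N ≥ 1 and Q ≥ 1 be integers. For every u ∈ S^{2N−1}, d_S(⌊u⌋_Q, u) ≤ 3 N^{1/2}/Q. Moreover, for any continuous nonnegative function Θ : S^{2N−1} × S^{2N−1} → ℝ, (1/vol(S^{2N−1})) ∫_{S^{2N−1}} Θ(⌊u⌋_Q, {u}_Q) du ≤ (exp(2 N^{3/2}/Q)/vol(S^{2N−1})²) ∫_{S^{2N−1}} ∫_{S^{2N−1}} Θ(⌊u⌋_Q, v) du dv. -/
/-!
**Distance.**  The cube points `ν_∞(u)` and its truncation agree in the face coordinate, where both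
have absolute value `1`, and differ by less than `1/Q` in the others.  Hence both have Euclidean norm
at least `1`, radial projection to the sphere does not increase their distance `√(2N)/Q`, and the
geodesic distance is at most `π/2` times the chord (`arccos_le_chord`); `(π/2)√2 ≤ 3`.

**Integral inequality.**  The uniform measure is the radial projection of the standard Gaussian
measure, and truncation and fractional part are invariant under positive scaling, so everything can
be computed for a Gaussian vector.  In the coordinates `r (±1, w)` of the cone over a face of the
cube, integrating out `r` leaves the density `coneDensity`, which is proportional to
`(1 + |w|²)^(-N)` (`lintegral_stdGauss_faces`).  On a cell of side `1/Q` this density varies by a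
factor of at most `exp (2 N^(3/2) / Q)` (`coneDensity_osc`).  Under Lebesgue measure the integer and
fractional parts of `Q w` are independent and the fractional part is uniform
(`lintegral_floor_fract_le`).  Thus the digits of a Gaussian vector are uniform on the cube and
independent of the truncation up to that factor (`lintegral_truncCube_digits_le`).

**The Sibuya map.**  It remains to see that Sibuya's map sends the uniform measure on the cube to
the uniform measure on the sphere (`lintegral_sibuya`).  By Box–Muller, each coordinate plane of a
Gaussian vector has a uniform angle and an independent exponential half squared radius
(`measurePreserving_boxMuller`), so after normalisation the squared radii are the proportions of
`N` independent exponentials.  These have the law of the spacings of `N - 1` independent uniform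
points (`lintegral_proportions_eq_spacings`): both laws are proportional to Lebesgue measure on the
simplex of increasing sequences, and both have mass `1`, so the constants need not be computed.

The kernel `Θ` is only continuous on the product of spheres; extending it by `∞` makes it measurable
everywhere without decreasing the left-hand side.
-/

open MeasureTheory ProbabilityTheory
open scoped ENNReal

noncomputable section

/-- The sup norm `‖x‖_∞` of a finite real vector. -/
def normInf {m : ℕ} (x : Fin m → ℝ) : ℝ := ⨆ i, |x i|

/-- The smallest index of a coordinate realizing `‖x‖_∞` (as a natural number). -/
def faceIdxN {m : ℕ} (x : Fin m → ℝ) : ℕ := sInf {k | ∃ h : k < m, |x ⟨k, h⟩| = normInf x}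

/-- Radial projection `ν_∞(u) = u / ‖u‖_∞` onto the cube `Σ`. -/
def nuInf {m : ℕ} (u : Fin m → ℝ) : Fin m → ℝ := fun k => u k / normInf u

/-- Cumulative order statistics for Sibuya's map. -/
def sibuyaYs (N : ℕ) (x : Fin (2 * N - 1) → ℝ) (k : ℕ) : ℝ :=
  if k = 0 then 0
  else if N ≤ k then 1
  else
    let tail : Fin (N - 1) → ℝ := fun i =>
      if h : N + i.val < 2 * N - 1 then x ⟨N + i.val, h⟩ else 0
    if h : k - 1 < N - 1 then tail (Tuple.sort tail ⟨k - 1, h⟩) else 1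

/-- Sibuya's map `S : [0,1)^(2N−1) → S^(2N−1)`. -/
def sibuya (N : ℕ) (x : Fin (2 * N - 1) → ℝ) : Fin (2 * N) → ℝ := fun j =>
  let i := j.val / 2
  let ang := if h : i < 2 * N - 1 then 2 * Real.pi * x ⟨i, h⟩ else 0
  Real.sqrt (sibuyaYs N x (i + 1) - sibuyaYs N x i) *
    (if j.val % 2 = 0 then Real.cos ang else Real.sin ang)

/-- The truncation `⌊u⌋_Q ∈ S^(2N−1)` at precision `Q`: truncate all cube coordinates of
`ν_∞(u)` except the face coordinate, then renormalize to the Euclidean sphere. -/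
def truncSphere (N Q : ℕ) (u : Fin (2 * N) → ℝ) : Fin (2 * N) → ℝ :=
  let x := nuInf u
  let a : Fin (2 * N) → ℝ := fun k => if k.val = faceIdxN x then x k else truncQ Q (x k)
  (Real.sqrt (∑ i, a i ^ 2))⁻¹ • a

/-- The fractional part `{u}_Q ∈ S^(2N−1)` at precision `Q`: the remaining digits of the
non-face coordinates of `ν_∞(u)`, fed through Sibuya's map. -/
def fracSphere (N Q : ℕ) (u : Fin (2 * N) → ℝ) : Fin (2 * N) → ℝ :=
  let x := nuInf u
  sibuya N (fun j =>
    let k := if j.val < faceIdxN x then j.val else j.val + 1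
    if h : k < 2 * N then (x ⟨k, h⟩ - truncQ Q (x ⟨k, h⟩)) * Q else 0)

/-- Geodesic distance on the unit sphere: `cos d_S(x,y) = ⟨x,y⟩`. -/
def dSph {m : ℕ} (x y : Fin m → ℝ) : ℝ := Real.arccos (∑ i, x i * y i)

/-- The uniform probability measure on `S^(2N−1) ⊂ ℝ^(2N)` (pushforward of the standard
Gaussian under radial normalization). -/
def uniformSphere (N : ℕ) : Measure (Fin (2 * N) → ℝ) :=
  Measure.map (fun x => (Real.sqrt (∑ i, x i ^ 2))⁻¹ • x)
    (Measure.pi fun _ => gaussianReal 0 1)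

/-! ### Sup norm, faces of the cube, and the distance bound -/

theorem abs_le_normInf {m : ℕ} (x : Fin m → ℝ) (i : Fin m) : |x i| ≤ normInf x :=
  le_ciSup (f := fun i => |x i|) (Set.finite_range _).bddAbove i

theorem exists_abs_eq_normInf {n : ℕ} (x : Fin (n + 1) → ℝ) : ∃ i, |x i| = normInf x :=
  exists_eq_ciSup_of_finite (f := fun i => |x i|)

theorem normInf_eq_of {m : ℕ} {x : Fin m → ℝ} {i : Fin m} (h : ∀ k, |x k| ≤ |x i|) :
    normInf x = |x i| := by
  have : Nonempty (Fin m) := ⟨i⟩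
  exact le_antisymm (ciSup_le h) (abs_le_normInf x i)

theorem normInf_nonneg {m : ℕ} (x : Fin m → ℝ) : 0 ≤ normInf x :=
  Real.iSup_nonneg fun _ => abs_nonneg _

theorem normInf_smul {m : ℕ} {c : ℝ} (hc : 0 ≤ c) (x : Fin m → ℝ) :
    normInf (c • x) = c * normInf x := by
  unfold normInf
  rw [Real.mul_iSup_of_nonneg hc]
  simp [abs_mul, abs_of_nonneg hc]

theorem normInf_pos {m : ℕ} {x : Fin m → ℝ} (hx : x ≠ 0) : 0 < normInf x := by
  obtain ⟨i, hi⟩ := Function.ne_iff.1 hx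
  exact lt_of_lt_of_le (abs_pos.2 hi) (abs_le_normInf x i)

theorem nuInf_smul {m : ℕ} {c : ℝ} (hc : 0 < c) (x : Fin m → ℝ) : nuInf (c • x) = nuInf x := by
  funext k
  simp only [nuInf, normInf_smul hc.le, Pi.smul_apply, smul_eq_mul]
  rw [mul_div_mul_left _ _ hc.ne']

theorem nuInf_eq_self {m : ℕ} {x : Fin m → ℝ} (hx : normInf x = 1) : nuInf x = x := by
  funext k; simp [nuInf, hx]

theorem nuInf_eq_smul {m : ℕ} (x : Fin m → ℝ) : nuInf x = (normInf x)⁻¹ • x := by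
  funext k; simp [nuInf, div_eq_inv_mul]

theorem normInf_nuInf {m : ℕ} {x : Fin m → ℝ} (hx : x ≠ 0) : normInf (nuInf x) = 1 := by
  rw [nuInf_eq_smul, normInf_smul (inv_nonneg.2 (normInf_nonneg x)),
    inv_mul_cancel₀ (ne_of_gt (normInf_pos hx))]

/-- `faceIdxN` is the smallest index at which the sup norm is attained. -/
theorem faceIdxN_eq_iff {n : ℕ} (x : Fin (n + 1) → ℝ) (i : Fin (n + 1)) :
    faceIdxN x = i ↔ |x i| = normInf x ∧ ∀ k < i, |x k| ≠ normInf x := by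
  have hne : {k | ∃ h : k < n + 1, |x ⟨k, h⟩| = normInf x}.Nonempty := by
    obtain ⟨j, hj⟩ := exists_abs_eq_normInf x
    exact ⟨j, j.2, hj⟩
  constructor
  · intro h
    have hmem := Nat.sInf_mem hne
    change faceIdxN x ∈ _ at hmem
    rw [h] at hmem
    obtain ⟨_, h2⟩ := hmem
    refine ⟨h2, fun k hk hk' => ?_⟩
    have : faceIdxN x ≤ k := Nat.sInf_le ⟨k.2, hk'⟩
    rw [h] at this
    exact absurd hk (not_lt.2 this)
  · rintro ⟨h1, h2⟩
    refine le_antisymm (Nat.sInf_le ⟨i.2, h1⟩) (le_csInf hne ?_)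
    rintro k ⟨hk, hk'⟩
    by_contra hlt
    exact h2 ⟨k, hk⟩ (not_le.1 hlt) hk'

theorem exists_faceIdxN_eq {n : ℕ} (x : Fin (n + 1) → ℝ) : ∃ i : Fin (n + 1), faceIdxN x = i := by
  have hne : {k | ∃ h : k < n + 1, |x ⟨k, h⟩| = normInf x}.Nonempty := by
    obtain ⟨j, hj⟩ := exists_abs_eq_normInf x
    exact ⟨j, j.2, hj⟩
  obtain ⟨h, -⟩ := Nat.sInf_mem hne
  exact ⟨⟨_, h⟩, rfl⟩

theorem truncQ_le {Q : ℕ} (hQ : 1 ≤ Q) (a : ℝ) : truncQ Q a ≤ a := by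
  have hq : (0 : ℝ) < Q := by exact_mod_cast hQ
  rw [truncQ, div_le_iff₀ hq, mul_comm a]
  exact Int.floor_le _

theorem lt_truncQ_add {Q : ℕ} (hQ : 1 ≤ Q) (a : ℝ) : a < truncQ Q a + 1 / Q := by
  have hq : (0 : ℝ) < Q := by exact_mod_cast hQ
  rw [truncQ, ← add_div, lt_div_iff₀ hq, mul_comm a]
  exact Int.lt_floor_add_one _

/-- An arc is at most `π/2` times its chord; `√(2 - 2c)` is the chord length for the cosine `c`. -/
theorem arccos_le_chord (c : ℝ) : Real.arccos c ≤ Real.pi / 2 * Real.sqrt (2 - 2 * c) := by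
  have hpi := Real.pi_pos
  rcases lt_or_ge 1 c with h1 | h1
  · rw [Real.arccos_eq_zero.2 h1.le]; positivity
  rcases lt_or_ge c (-1) with h2 | h2
  · rw [Real.arccos_eq_pi.2 h2.le]
    have : 2 ≤ Real.sqrt (2 - 2 * c) := Real.le_sqrt_of_sq_le (by linarith)
    nlinarith
  set θ := Real.arccos c with hθ
  have hc : Real.cos θ = c := Real.cos_arccos h2 h1
  have h0 : 0 ≤ θ := Real.arccos_nonneg c
  have hle : θ ≤ Real.pi := Real.arccos_le_pi c
  have hs : 2 / Real.pi * (θ / 2) ≤ Real.sin (θ / 2) :=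
    Real.mul_le_sin (by linarith) (by linarith)
  have h4 : 2 - 2 * c = (2 * Real.sin (θ / 2)) ^ 2 := by
    have h5 := Real.cos_sq (θ / 2)
    rw [mul_div_cancel₀ θ two_ne_zero, hc] at h5
    nlinarith [Real.sin_sq_add_cos_sq (θ / 2)]
  rw [h4, Real.sqrt_sq]
  · calc θ = Real.pi * (2 / Real.pi * (θ / 2)) := by field_simp
      _ ≤ Real.pi * Real.sin (θ / 2) := by gcongr
      _ = _ := by ring
  · have : 0 ≤ 2 / Real.pi * (θ / 2) := by positivity
    linarith

theorem dSph_truncSphere_le (N Q : ℕ) (hN : 1 ≤ N) (hQ : 1 ≤ Q) (u : Fin (2 * N) → ℝ)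
    (hu : ∑ i, u i ^ 2 = 1) : dSph (truncSphere N Q u) u ≤ 3 * Real.sqrt N / Q := by
  obtain ⟨m, rfl⟩ : ∃ m, N = m + 1 := ⟨N - 1, by omega⟩
  have hq : (0 : ℝ) < Q := by exact_mod_cast hQ
  have hu0 : u ≠ 0 := by
    rintro rfl; simp at hu
  set x := nuInf u with hx
  set L := normInf u with hL
  have hLpos : 0 < L := normInf_pos hu0
  have hux : ∀ i, u i = L * x i := fun i => by
    change u i = L * (u i / L)
    field_simp
  set a : Fin (2 * (m + 1)) → ℝ :=
    fun k => if k.val = faceIdxN x then x k else truncQ Q (x k) with ha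
  have hdef : truncSphere (m + 1) Q u = (Real.sqrt (∑ i, a i ^ 2))⁻¹ • a := rfl
  obtain ⟨i₀, hi₀⟩ := exists_faceIdxN_eq (n := 2 * m + 1) x
  have hxi : |x i₀| = 1 := by
    rw [((faceIdxN_eq_iff (n := 2 * m + 1) x i₀).1 hi₀).1]; exact normInf_nuInf hu0
  have hai : a i₀ = x i₀ := if_pos hi₀.symm
  have hA : 1 ≤ ∑ i, a i ^ 2 := by
    calc (1 : ℝ) = a i₀ ^ 2 := by rw [hai, ← sq_abs, hxi, one_pow]
      _ ≤ _ := Finset.single_le_sum (f := fun i => a i ^ 2) (fun i _ => sq_nonneg _)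
        (Finset.mem_univ i₀)
  have hX : 1 ≤ ∑ i, x i ^ 2 := by
    calc (1 : ℝ) = x i₀ ^ 2 := by rw [← sq_abs, hxi, one_pow]
      _ ≤ _ := Finset.single_le_sum (f := fun i => x i ^ 2) (fun i _ => sq_nonneg _)
        (Finset.mem_univ i₀)
  have hLX : L ^ 2 * ∑ i, x i ^ 2 = 1 := by
    rw [← hu, Finset.mul_sum]; simp [hux, mul_pow]
  have hdist : ∑ i, (a i - x i) ^ 2 ≤ 2 * (m + 1) / Q ^ 2 := by
    calc ∑ i, (a i - x i) ^ 2 ≤ ∑ i : Fin (2 * (m + 1)), (1 / (Q : ℝ)) ^ 2 := by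
          refine Finset.sum_le_sum fun i _ => ?_
          by_cases h : i.val = faceIdxN x
          · have h0 : a i - x i = 0 := by simp only [ha, if_pos h, sub_self]
            rw [h0, zero_pow two_ne_zero]; positivity
          · simp only [ha, if_neg h]
            have h1 := truncQ_le hQ (x i)
            have h2 := lt_truncQ_add hQ (x i)
            rw [sq_le_sq, abs_of_nonneg (by positivity : (0 : ℝ) ≤ 1 / Q), abs_le]
            constructor <;> linarith
      _ = _ := by simp; ring
  have hexp : ∑ i, (a i - x i) ^ 2 = ∑ i, a i ^ 2 + ∑ i, x i ^ 2 - 2 * ∑ i, a i * x i := by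
    rw [Finset.mul_sum, ← Finset.sum_add_distrib, ← Finset.sum_sub_distrib]
    exact Finset.sum_congr rfl fun i _ => by ring
  set A := ∑ i, a i ^ 2
  set X := ∑ i, x i ^ 2
  set P := ∑ i, a i * x i
  have hsA : 1 ≤ Real.sqrt A := Real.one_le_sqrt.2 hA
  have hsX : 1 ≤ Real.sqrt X := Real.one_le_sqrt.2 hX
  have hLs : L = (Real.sqrt X)⁻¹ := by
    apply eq_inv_of_mul_eq_one_left
    have : (L * Real.sqrt X) ^ 2 = 1 := by rw [mul_pow, Real.sq_sqrt (by positivity), hLX]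
    nlinarith [mul_pos hLpos (by positivity : 0 < Real.sqrt X)]
  have hinner : ∑ i, truncSphere (m + 1) Q u i * u i = P / (Real.sqrt A * Real.sqrt X) := by
    rw [hdef, div_eq_mul_inv, mul_inv, ← hLs, Finset.sum_mul]
    refine Finset.sum_congr rfl fun i _ => ?_
    rw [hux, Pi.smul_apply, smul_eq_mul]; ring
  have hchord : 2 - 2 * (P / (Real.sqrt A * Real.sqrt X)) ≤ 2 * (m + 1) / Q ^ 2 := by
    refine le_trans ?_ (hexp ▸ hdist)
    have h1 : 1 ≤ Real.sqrt A * Real.sqrt X := one_le_mul_of_one_le_of_one_le hsA hsX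
    have h2 : 0 ≤ A + X - 2 * P := hexp ▸ Finset.sum_nonneg fun i _ => sq_nonneg _
    have h3 : 2 - 2 * (P / (Real.sqrt A * Real.sqrt X))
        = (2 * (Real.sqrt A * Real.sqrt X) - 2 * P) / (Real.sqrt A * Real.sqrt X) := by
      field_simp
    rw [h3, div_le_iff₀ (by linarith)]
    have h4 : 2 * (Real.sqrt A * Real.sqrt X) ≤ A + X := by
      nlinarith [sq_nonneg (Real.sqrt A - Real.sqrt X), Real.sq_sqrt (by positivity : 0 ≤ A),
        Real.sq_sqrt (by positivity : 0 ≤ X)]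
    nlinarith
  rw [dSph, hinner]
  refine (arccos_le_chord _).trans ?_
  have h5 : Real.sqrt (2 * (m + 1) / Q ^ 2) = Real.sqrt 2 * Real.sqrt ((m + 1 : ℕ) : ℝ) / Q := by
    rw [Real.sqrt_div (by positivity), Real.sqrt_sq hq.le, Real.sqrt_mul (by norm_num)]
    push_cast; rfl
  have h6 : Real.pi / 2 * Real.sqrt 2 ≤ 3 := by
    have h7 : Real.sqrt 2 ≤ 1.5 := by
      rw [Real.sqrt_le_left (by norm_num)]; norm_num
    nlinarith [Real.pi_lt_d2, Real.pi_pos, Real.sqrt_nonneg 2]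
  calc _ ≤ Real.pi / 2 * (Real.sqrt 2 * Real.sqrt ((m + 1 : ℕ) : ℝ) / Q) := by
        rw [← h5]; gcongr
    _ = (Real.pi / 2 * Real.sqrt 2) * Real.sqrt ((m + 1 : ℕ) : ℝ) / Q := by ring
    _ ≤ _ := by gcongr

/-! ### Cells of the cube and the cone density -/

/-- The uniform probability measure on the cube `[0,1)^n`. -/
def cubeMeasure (n : ℕ) : Measure (Fin n → ℝ) :=
  Measure.pi fun _ => volume.restrict (Set.Ico (0 : ℝ) 1)

instance : IsProbabilityMeasure ((volume : Measure ℝ).restrict (Set.Ico (0 : ℝ) 1)) :=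
  ⟨by simp⟩

instance (n : ℕ) : IsProbabilityMeasure (cubeMeasure n) := by
  unfold cubeMeasure; infer_instance

theorem cubeMeasure_eq_restrict (n : ℕ) :
    cubeMeasure n = volume.restrict (Set.univ.pi fun _ => Set.Ico (0 : ℝ) 1) := by
  rw [cubeMeasure, volume_pi, Measure.restrict_pi_pi]

theorem ae_cubeMeasure_mem (n : ℕ) :
    ∀ᵐ y ∂cubeMeasure n, ∀ k, y k ∈ Set.Ico (0 : ℝ) 1 := by
  rw [cubeMeasure_eq_restrict]
  filter_upwards [ae_restrict_mem (MeasurableSet.univ_pi fun _ => measurableSet_Ico)] with y hy k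
  exact hy k trivial

theorem lintegral_comp_smul_pi {n : ℕ} {r : ℝ} (hr : r ≠ 0) (g : (Fin n → ℝ) → ℝ≥0∞) :
    ∫⁻ w, g w = ENNReal.ofReal (|r| ^ n) * ∫⁻ w, g (r • w) := by
  have h := Measure.map_addHaar_smul (volume : Measure (Fin n → ℝ)) hr
  have h2 : ∫⁻ w, g (r • w) = ∫⁻ w, g w ∂(Measure.map (r • ·) volume) :=
    ((Homeomorph.smulOfNeZero r hr).measurableEmbedding.lintegral_map g).symm
  rw [h2, h, lintegral_smul_measure, smul_eq_mul, ← mul_assoc, ← ENNReal.ofReal_mul (by positivity)]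
  have : |r| ^ n * |(r ^ Module.finrank ℝ (Fin n → ℝ))⁻¹| = 1 := by
    rw [abs_inv, abs_pow, Module.finrank_fin_fun, mul_inv_cancel₀ (by positivity)]
  rw [this, ENNReal.ofReal_one, one_mul]

/-- Decomposition of Lebesgue measure along the integer translates of the unit cube. -/
theorem lintegral_eq_tsum_cells {n : ℕ} (g : (Fin n → ℝ) → ℝ≥0∞) :
    ∫⁻ z, g z = ∑' j : Fin n → ℤ, ∫⁻ y, g (fun k => j k + y k) ∂cubeMeasure n := by
  let cell : (Fin n → ℤ) → Set (Fin n → ℝ) :=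
    fun j => Set.univ.pi fun k => Set.Ico (j k : ℝ) (j k + 1)
  have hmem : ∀ j z, z ∈ cell j ↔ ∀ k, ⌊z k⌋ = j k := by
    intro j z
    simp only [cell, Set.mem_univ_pi, Set.mem_Ico, Int.floor_eq_iff]
  have hU : ⋃ j, cell j = Set.univ := by
    refine Set.eq_univ_of_forall fun z => Set.mem_iUnion.2 ⟨fun k => ⌊z k⌋, (hmem _ _).2 fun _ => rfl⟩
  have hd : Pairwise (Function.onFun Disjoint cell) := by
    intro i j hij
    refine Set.disjoint_left.2 fun z hi hj => hij (funext fun k => ?_)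
    rw [← (hmem i z).1 hi k, (hmem j z).1 hj k]
  rw [← setLIntegral_univ, ← hU,
    lintegral_iUnion (fun j => MeasurableSet.univ_pi fun _ => measurableSet_Ico) hd]
  refine tsum_congr fun j => ?_
  let v : Fin n → ℝ := fun k => j k
  have hp : (fun y => v + y) ⁻¹' cell j = Set.univ.pi fun _ => Set.Ico (0 : ℝ) 1 := by
    ext y
    simp [cell, v]
  have := (measurePreserving_add_left (volume : Measure (Fin n → ℝ)) v).setLIntegral_comp_preimage_emb
    (MeasurableEquiv.addLeft v).measurableEmbedding g (cell j)
  rw [← this, hp, cubeMeasure_eq_restrict]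
  rfl

/-- The volume-splitting argument behind near-independence.  The integer part and the fractional
part of `Q w` are independent for Lebesgue measure, so a weight `f` whose oscillation on each cell
of side `1/Q` is at most a factor `C` makes them independent up to that factor. -/
theorem lintegral_floor_fract_le {n Q : ℕ} (hQ : 1 ≤ Q) (h : (Fin n → ℤ) → (Fin n → ℝ) → ℝ≥0∞)
    (hh : ∀ j, Measurable (h j)) (f : (Fin n → ℝ) → ℝ≥0∞) (hf : Measurable f) (C : ℝ≥0∞)
    (hC : ∀ w w' : Fin n → ℝ, (∀ k, ⌊(Q : ℝ) * w k⌋ = ⌊(Q : ℝ) * w' k⌋) → f w ≤ C * f w') :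
    ∫⁻ w, h (fun k => ⌊(Q : ℝ) * w k⌋) (fun k => Int.fract ((Q : ℝ) * w k)) * f w ≤
      C * ∫⁻ w, (∫⁻ y, h (fun k => ⌊(Q : ℝ) * w k⌋) y ∂cubeMeasure n) * f w := by
  have hq : (0 : ℝ) < Q := by exact_mod_cast hQ
  have hr : (Q : ℝ)⁻¹ ≠ 0 := by positivity
  rw [lintegral_comp_smul_pi hr, lintegral_comp_smul_pi hr (fun w => _ * f w),
    lintegral_eq_tsum_cells, lintegral_eq_tsum_cells, mul_left_comm]
  gcongr
  rw [← ENNReal.tsum_mul_left]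
  refine ENNReal.tsum_le_tsum fun j => ?_
  simp only [Pi.smul_apply, smul_eq_mul, mul_inv_cancel_left₀ hq.ne']
  set F : (Fin n → ℝ) → ℝ≥0∞ := fun y => f ((Q : ℝ)⁻¹ • fun k => j k + y k) with hF
  have hFm : Measurable F := hf.comp (by fun_prop)
  have hfl : ∀ y : Fin n → ℝ, (∀ k, y k ∈ Set.Ico (0 : ℝ) 1) →
      (fun k => ⌊(j k : ℝ) + y k⌋) = j ∧ (fun k => Int.fract ((j k : ℝ) + y k)) = y := by
    intro y hy
    have h0 : ∀ k, ⌊y k⌋ = 0 := fun k => Int.floor_eq_zero_iff.2 (hy k)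
    constructor <;> funext k
    · simp [h0]
    · rw [Int.fract_intCast_add, Int.fract_eq_self.2 (hy k)]
  have hFC : ∀ y, (∀ k, y k ∈ Set.Ico (0 : ℝ) 1) → F y ≤ C * ∫⁻ y', F y' ∂cubeMeasure n := by
    intro y hy
    rw [← lintegral_const_mul _ hFm]
    calc F y = ∫⁻ _, F y ∂cubeMeasure n := by simp
      _ ≤ _ := by
        refine lintegral_mono_ae ?_
        filter_upwards [ae_cubeMeasure_mem n] with y' hy'
        refine hC _ _ fun k => ?_
        simp only [Pi.smul_apply, smul_eq_mul, mul_inv_cancel_left₀ hq.ne']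
        rw [congrFun (hfl y hy).1 k, congrFun (hfl y' hy').1 k]
  calc ∫⁻ y, h (fun k => ⌊(j k : ℝ) + y k⌋) (fun k => Int.fract ((j k : ℝ) + y k)) * F y
        ∂cubeMeasure n
      ≤ ∫⁻ y, h j y * (C * ∫⁻ y', F y' ∂cubeMeasure n) ∂cubeMeasure n := by
        refine lintegral_mono_ae ?_
        filter_upwards [ae_cubeMeasure_mem n] with y hy
        rw [(hfl y hy).1, (hfl y hy).2]
        gcongr
        exact hFC y hy
    _ = C * ∫⁻ y, (∫⁻ y', h j y' ∂cubeMeasure n) * F y ∂cubeMeasure n := by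
        rw [lintegral_mul_const _ (hh j), lintegral_const_mul _ hFm, mul_left_comm]
    _ = _ := by
        congr 1
        refine lintegral_congr_ae ?_
        filter_upwards [ae_cubeMeasure_mem n] with y hy
        rw [(hfl y hy).1]

/-- Density at `w`, with respect to Lebesgue measure on a face `{x_i = ε}` of the cube `[-1,1]^(n+1)`,
of the radial projection of the standard Gaussian measure of `ℝ^(n+1)` onto that face. -/
def coneDensity (n : ℕ) (w : Fin n → ℝ) : ℝ≥0∞ :=
  ∫⁻ r in Set.Ioi (0 : ℝ), ENNReal.ofReal (r ^ n) *
    (gaussianPDF 0 1 r * ∏ k, gaussianPDF 0 1 (r * w k))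

theorem measurable_coneDensity (n : ℕ) : Measurable (coneDensity n) := by
  unfold coneDensity
  apply Measurable.lintegral_prod_right'
    (f := fun p : (Fin n → ℝ) × ℝ => ENNReal.ofReal (p.2 ^ n) *
    (gaussianPDF 0 1 p.2 * ∏ k, gaussianPDF 0 1 (p.2 * p.1 k)))
  have := measurable_gaussianPDF 0 1
  fun_prop

theorem gaussianPDF_mul_prod {n : ℕ} (r : ℝ) (w : Fin n → ℝ) :
    gaussianPDF 0 1 r * ∏ k, gaussianPDF 0 1 (r * w k) =
      ENNReal.ofReal ((Real.sqrt (2 * Real.pi))⁻¹ ^ (n + 1) *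
        Real.exp (-(r ^ 2 * (1 + ∑ k, w k ^ 2)) / 2)) := by
  simp only [gaussianPDF, gaussianPDFReal]
  rw [← ENNReal.ofReal_prod_of_nonneg (fun _ _ => by positivity),
    ← ENNReal.ofReal_mul (by positivity), Finset.prod_mul_distrib, ← Real.exp_sum]
  simp only [Finset.prod_const, Finset.card_univ, Fintype.card_fin, NNReal.coe_one, mul_one,
    sub_zero]
  congr 1
  have : -(r ^ 2 * (1 + ∑ k, w k ^ 2)) / 2 = -r ^ 2 / 2 + ∑ k, -(r * w k) ^ 2 / 2 := by
    rw [← Finset.sum_div, Finset.sum_neg_distrib]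
    simp only [mul_pow, ← Finset.mul_sum]
    ring
  rw [this, Real.exp_add]
  ring

/-- `coneDensity n w` is proportional to `(1 + |w|²)^(-(n+1)/2)`; this is the resulting comparison,
obtained by rescaling the radial variable. -/
theorem coneDensity_le {n : ℕ} {l : ℝ} (hl : 0 < l) {w w' : Fin n → ℝ}
    (h : 1 + ∑ k, w' k ^ 2 ≤ l ^ 2 * (1 + ∑ k, w k ^ 2)) :
    coneDensity n w ≤ ENNReal.ofReal (l ^ (n + 1)) * coneDensity n w' := by
  have himg : (fun s : ℝ => l * s) '' Set.Ioi 0 = Set.Ioi 0 := by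
    rw [Set.image_mul_left_Ioi hl, mul_zero]
  unfold coneDensity
  conv_lhs => rw [← himg]
  rw [lintegral_image_eq_lintegral_abs_deriv_mul (f' := fun _ => l) measurableSet_Ioi
    (fun x _ => by simpa using (hasDerivAt_id x).const_mul l |>.hasDerivWithinAt)
    (mul_right_injective₀ hl.ne').injOn,
    ← lintegral_const_mul' _ _ ENNReal.ofReal_ne_top]
  refine setLIntegral_mono' measurableSet_Ioi fun s hs => ?_
  have hs' : (0 : ℝ) < s := hs
  rw [gaussianPDF_mul_prod, gaussianPDF_mul_prod, ← ENNReal.ofReal_mul (by positivity),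
    ← ENNReal.ofReal_mul (by positivity), ← ENNReal.ofReal_mul (by positivity),
    ← ENNReal.ofReal_mul (by positivity), abs_of_pos hl]
  apply ENNReal.ofReal_le_ofReal
  have he : Real.exp (-((l * s) ^ 2 * (1 + ∑ k, w k ^ 2)) / 2) ≤
      Real.exp (-(s ^ 2 * (1 + ∑ k, w' k ^ 2)) / 2) := by
    apply Real.exp_le_exp.2
    have := mul_le_mul_of_nonneg_left h (sq_nonneg s)
    nlinarith
  calc _ = l ^ (n + 1) * (s ^ n * ((Real.sqrt (2 * Real.pi))⁻¹ ^ (n + 1) *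
        Real.exp (-((l * s) ^ 2 * (1 + ∑ k, w k ^ 2)) / 2))) := by ring
    _ ≤ _ := by gcongr

/-- Two points of the same cell of side `1/Q` have `1 + |w|²` equal up to the factor
`1 + t + t²`, where `t = √n / Q`; this is at most `exp (2√N / Q)` when `n ≤ 2N`. -/
theorem one_add_sq_le {n N Q : ℕ} (hn : 1 ≤ n) (hnN : n ≤ 2 * N) (hQ : 1 ≤ Q) {w w' : Fin n → ℝ}
    (h : ∀ k, ⌊(Q : ℝ) * w k⌋ = ⌊(Q : ℝ) * w' k⌋) :
    1 + ∑ k, w' k ^ 2 ≤ Real.exp (Real.sqrt N / Q) ^ 2 * (1 + ∑ k, w k ^ 2) := by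
  have hq : (0 : ℝ) < Q := by exact_mod_cast hQ
  have hn' : (0 : ℝ) < n := by exact_mod_cast hn
  set q := Real.sqrt n with hqdef
  have hqpos : 0 < q := Real.sqrt_pos.2 hn'
  have hqq : q ^ 2 = n := Real.sq_sqrt hn'.le
  set p := (Q : ℝ)⁻¹ with hp
  have hppos : 0 < p := by positivity
  have hclose : ∀ k, |w' k - w k| ≤ p := by
    intro k
    have h1 := Int.abs_sub_lt_one_of_floor_eq_floor (h k)
    rw [← mul_sub, abs_mul, abs_of_pos hq] at h1
    rw [hp, ← one_div, le_div_iff₀ hq, abs_sub_comm, mul_comm]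
    exact h1.le
  have hterm : ∀ k, w' k ^ 2 ≤ w k ^ 2 + p * (q * w k ^ 2 + 1 / q) + p ^ 2 := by
    intro k
    have h1 : |w' k| ≤ |w k| + p := by
      have := abs_sub_abs_le_abs_sub (w' k) (w k)
      linarith [hclose k]
    have h2 : 2 * |w k| ≤ q * w k ^ 2 + 1 / q := by
      rw [← sq_abs (w k)]
      have : q * |w k| ^ 2 + 1 / q - 2 * |w k| = (q * |w k| - 1) ^ 2 / q := by
        field_simp; ring
      have h3 : 0 ≤ (q * |w k| - 1) ^ 2 / q := by positivity
      linarith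
    have h4 : w' k ^ 2 ≤ (|w k| + p) ^ 2 := by
      rw [← sq_abs (w' k)]; gcongr
    nlinarith [sq_abs (w k), mul_le_mul_of_nonneg_left h2 hppos.le]
  have hsum : ∑ k, w' k ^ 2 ≤ ∑ k, w k ^ 2 + p * (q * ∑ k, w k ^ 2 + q) + (q * p) ^ 2 := by
    refine (Finset.sum_le_sum fun k _ => hterm k).trans_eq ?_
    simp only [Finset.sum_add_distrib, ← Finset.mul_sum, Finset.sum_const, Finset.card_univ,
      Fintype.card_fin, nsmul_eq_mul]
    rw [mul_pow, hqq, ← hqq]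
    field_simp
  set W := ∑ k, w k ^ 2
  have hW : 0 ≤ W := Finset.sum_nonneg fun _ _ => sq_nonneg _
  have hexp : 1 + q * p + (q * p) ^ 2 ≤ Real.exp (Real.sqrt N / Q) ^ 2 := by
    rw [← Real.exp_nat_mul]
    have hτ : 0 ≤ ((2 : ℕ) : ℝ) * (Real.sqrt N / Q) := by positivity
    refine le_trans ?_ (Real.quadratic_le_exp_of_nonneg hτ)
    have hNn : (n : ℝ) ≤ 2 * N := by exact_mod_cast hnN
    have hNs : Real.sqrt N ^ 2 = N := Real.sq_sqrt (Nat.cast_nonneg N)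
    have h1 : q ≤ 2 * Real.sqrt N := by
      apply le_of_sq_le_sq _ (by positivity)
      rw [hqq, mul_pow, hNs]; linarith
    have h2 : q ^ 2 ≤ 2 * Real.sqrt N ^ 2 := by rw [hqq, hNs]; exact hNn
    have h3 : q * p ≤ 2 * Real.sqrt N * p := by gcongr
    have h4 : q ^ 2 * p ^ 2 ≤ 2 * Real.sqrt N ^ 2 * p ^ 2 := by gcongr
    rw [div_eq_mul_inv, ← hp]
    push_cast
    nlinarith
  calc 1 + ∑ k, w' k ^ 2 ≤ (1 + q * p + (q * p) ^ 2) * (1 + W) := by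
        nlinarith [mul_nonneg (sq_nonneg (q * p)) hW]
    _ ≤ _ := by gcongr

/-- Since the exponent of `1 + |w|²` in the density is `-N`, the factor `exp (2√N / Q)` for this
quantity becomes `exp (2 N^(3/2) / Q)`. -/
theorem coneDensity_osc {N Q : ℕ} (hN : 1 ≤ N) (hQ : 1 ≤ Q) {w w' : Fin (2 * N - 1) → ℝ}
    (h : ∀ k, ⌊(Q : ℝ) * w k⌋ = ⌊(Q : ℝ) * w' k⌋) :
    coneDensity _ w ≤
      ENNReal.ofReal (Real.exp (2 * (N : ℝ) ^ (3 / 2 : ℝ) / Q)) * coneDensity _ w' := by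
  have h1 := coneDensity_le (Real.exp_pos _)
    (one_add_sq_le (N := N) (by omega) (by omega) hQ h)
  refine h1.trans_eq ?_
  congr 2
  have h2 : 2 * N - 1 + 1 = 2 * N := by omega
  have h3 : (N : ℝ) ^ (3 / 2 : ℝ) = N * Real.sqrt N := by
    have hN0 : (0 : ℝ) < N := by exact_mod_cast hN
    rw [Real.sqrt_eq_rpow, ← Real.rpow_one_add' hN0.le (by norm_num)]
    norm_num
  rw [h2, ← Real.exp_nat_mul, h3]
  push_cast
  ring_nf

/-! ### The Gaussian measure in cube-face coordinates -/

/-- The standard Gaussian measure on `ℝ^n`. -/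
def stdGauss (n : ℕ) : Measure (Fin n → ℝ) := Measure.pi fun _ => gaussianReal 0 1

instance (n : ℕ) : IsProbabilityMeasure (stdGauss n) := by
  unfold stdGauss; infer_instance

theorem lintegral_pi_prod {n : ℕ} (μ : Measure ℝ) [SigmaFinite μ] (f : Fin n → ℝ → ℝ≥0∞)
    (hf : ∀ i, Measurable (f i)) :
    ∫⁻ x, ∏ i, f i (x i) ∂(Measure.pi fun _ : Fin n => μ) = ∏ i, ∫⁻ t, f i t ∂μ := by
  induction n with
  | zero => simp
  | succ n ih =>
    have hp := (measurePreserving_piFinSuccAbove (fun _ : Fin (n + 1) => μ) 0).symm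
    rw [← hp.lintegral_comp_emb (MeasurableEquiv.measurableEmbedding _), Fin.prod_univ_succ,
      ← ih (fun i => f i.succ) (fun i => hf _), ← lintegral_prod_mul (hf 0).aemeasurable]
    · refine lintegral_congr fun p => ?_
      rw [Fin.prod_univ_succ]
      simp [MeasurableEquiv.piFinSuccAbove]
    · exact (Finset.measurable_prod _ fun i _ => (hf _).comp (measurable_pi_apply i)).aemeasurable

theorem pi_withDensity {n : ℕ} (μ : Measure ℝ) [SigmaFinite μ] (f : ℝ → ℝ≥0∞) (hf : Measurable f)
    [SigmaFinite (μ.withDensity f)] :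
    (Measure.pi fun _ : Fin n => μ.withDensity f) =
      (Measure.pi fun _ : Fin n => μ).withDensity fun x => ∏ i, f (x i) := by
  refine Measure.pi_eq fun s hs => ?_
  rw [withDensity_apply _ (MeasurableSet.univ_pi hs), ← lintegral_indicator (MeasurableSet.univ_pi hs)]
  have : (Set.univ.pi s).indicator (fun x : Fin n → ℝ => ∏ i, f (x i)) =
      fun x => ∏ i, (s i).indicator f (x i) := by
    funext x
    by_cases hx : x ∈ Set.univ.pi s
    · rw [Set.indicator_of_mem hx]
      exact Finset.prod_congr rfl fun i _ => (Set.indicator_of_mem (hx i trivial) f).symm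
    · rw [Set.indicator_of_notMem hx]
      simp only [Set.mem_univ_pi, not_forall] at hx
      obtain ⟨i, hi⟩ := hx
      exact (Finset.prod_eq_zero (Finset.mem_univ i) (Set.indicator_of_notMem hi f)).symm
  rw [this, lintegral_pi_prod μ (fun i => (s i).indicator f) fun i => hf.indicator (hs i)]
  refine Finset.prod_congr rfl fun i _ => ?_
  rw [lintegral_indicator (hs i), withDensity_apply _ (hs i)]

theorem lintegral_stdGauss (n : ℕ) (g : (Fin n → ℝ) → ℝ≥0∞) (hg : Measurable g) :
    ∫⁻ v, g v ∂stdGauss n = ∫⁻ v, (∏ k, gaussianPDF 0 1 (v k)) * g v := by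
  have h1 : gaussianReal 0 1 = volume.withDensity (gaussianPDF 0 1) :=
    gaussianReal_of_var_ne_zero 0 one_ne_zero
  have : SigmaFinite (volume.withDensity (gaussianPDF 0 1)) := by rw [← h1]; infer_instance
  have hm := measurable_gaussianPDF 0 1
  rw [stdGauss, h1, pi_withDensity _ _ hm, lintegral_withDensity_eq_lintegral_mul _ _ hg]
  · rfl
  · fun_prop

/-- The two signs correspond to the opposite faces `{x_i = ±1}` of the cube. -/
theorem lintegral_gaussianReal_split (g : ℝ → ℝ≥0∞) (hg : Measurable g) :
    ∫⁻ r, g r ∂gaussianReal 0 1 =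
      (∫⁻ r in Set.Ioi (0 : ℝ), gaussianPDF 0 1 r * g r) +
        ∫⁻ r in Set.Ioi (0 : ℝ), gaussianPDF 0 1 r * g (-r) := by
  have hm := measurable_gaussianPDF 0 1
  rw [gaussianReal_of_var_ne_zero 0 one_ne_zero, lintegral_withDensity_eq_lintegral_mul _ hm hg,
    ← lintegral_add_compl _ (measurableSet_Ioi (a := (0 : ℝ)))]
  congr 1
  rw [Set.compl_Ioi, ← setLIntegral_congr (Iio_ae_eq_Iic (a := (0 : ℝ)) (μ := volume)),
    ← (Measure.measurePreserving_neg (volume : Measure ℝ)).setLIntegral_comp_preimage_emb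
      (MeasurableEquiv.neg ℝ).measurableEmbedding]
  simp [gaussianPDF, gaussianPDFReal]

theorem normInf_eq_norm {n : ℕ} (x : Fin (n + 1) → ℝ) : normInf x = ‖x‖ := by
  refine le_antisymm (ciSup_le fun i => norm_le_pi_norm x i) ?_
  exact (pi_norm_le_iff_of_nonneg (normInf_nonneg x)).2 fun i => abs_le_normInf x i

theorem measurable_normInf {n : ℕ} : Measurable (normInf : (Fin (n + 1) → ℝ) → ℝ) := by
  have : (normInf : (Fin (n + 1) → ℝ) → ℝ) = fun x => ‖x‖ := funext normInf_eq_norm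
  rw [this]; exact measurable_norm

theorem measurable_faceIdxN {n : ℕ} : Measurable (faceIdxN : (Fin (n + 1) → ℝ) → ℕ) := by
  refine measurable_to_countable' fun k => ?_
  by_cases hk : k < n + 1
  · have : faceIdxN ⁻¹' {k} = {x : Fin (n + 1) → ℝ | |x ⟨k, hk⟩| = normInf x ∧
        ∀ j < (⟨k, hk⟩ : Fin (n + 1)), |x j| ≠ normInf x} := by
      ext x; exact faceIdxN_eq_iff x ⟨k, hk⟩
    rw [this]
    have hm := measurable_normInf (n := n)
    have habs : ∀ j, Measurable fun x : Fin (n + 1) → ℝ => |x j| := fun j =>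
      (measurable_pi_apply j).abs
    refine (measurableSet_eq_fun (habs _) hm).inter ?_
    have h2 : {x : Fin (n + 1) → ℝ | ∀ j < (⟨k, hk⟩ : Fin (n + 1)), |x j| ≠ normInf x} =
        ⋂ j, ⋂ _ : j < (⟨k, hk⟩ : Fin (n + 1)), {x | |x j| = normInf x}ᶜ := by
      ext x; simp
    change MeasurableSet {x : Fin (n + 1) → ℝ | ∀ j < (⟨k, hk⟩ : Fin (n + 1)), |x j| ≠ normInf x}
    rw [h2]
    exact MeasurableSet.iInter fun j => MeasurableSet.iInter fun _ =>
      (measurableSet_eq_fun (habs _) hm).compl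
  · have : faceIdxN ⁻¹' {k} = (∅ : Set (Fin (n + 1) → ℝ)) := by
      ext x
      obtain ⟨i, hi⟩ := exists_faceIdxN_eq x
      simp only [Set.mem_preimage, Set.mem_singleton_iff, Set.mem_empty_iff_false, iff_false]
      intro h; have := i.2; omega
    rw [this]; exact MeasurableSet.empty

theorem faceIdxN_smul {n : ℕ} {c : ℝ} (hc : 0 < c) (x : Fin (n + 1) → ℝ) :
    faceIdxN (c • x) = faceIdxN x := by
  unfold faceIdxN
  congr 1; ext k
  simp only [normInf_smul hc.le, Pi.smul_apply, smul_eq_mul, abs_mul, abs_of_pos hc,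
    mul_right_inj' (ne_of_gt hc)]

/-- Points of the open face `{x_i = ε}` lie on no other face. -/
theorem faceIdxN_insertNth {n : ℕ} (i : Fin (n + 1)) {e : ℝ} (he : |e| = 1) {w : Fin n → ℝ}
    (hw : ∀ k, |w k| < 1) :
    normInf (i.insertNth e w : Fin (n + 1) → ℝ) = 1 ∧
      faceIdxN (i.insertNth e w : Fin (n + 1) → ℝ) = i := by
  have h1 : normInf (i.insertNth e w : Fin (n + 1) → ℝ) = 1 := by
    rw [normInf_eq_of (i := i), Fin.insertNth_apply_same, he]
    intro k
    rw [Fin.insertNth_apply_same, he]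
    induction k using Fin.succAboveCases i with
    | x => simp [he]
    | p k => simpa using (hw k).le
  refine ⟨h1, (faceIdxN_eq_iff _ _).2 ⟨by rw [h1]; simpa using he, fun k hk => ?_⟩⟩
  obtain ⟨j, rfl⟩ := Fin.exists_succAbove_eq hk.ne
  rw [h1, Fin.insertNth_apply_succAbove]
  exact (hw j).ne

theorem measurable_insertNth {n : ℕ} (i : Fin (n + 1)) :
    Measurable fun p : ℝ × (Fin n → ℝ) => (i.insertNth p.1 p.2 : Fin (n + 1) → ℝ) :=
  (MeasurableEquiv.piFinSuccAbove (fun _ : Fin (n + 1) => ℝ) i).symm.measurable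

/-- Integration over one half-cone `{± x_i > 0}` in the coordinates `x = r (e, w)`. -/
theorem lintegral_half_cone {n : ℕ} (i : Fin (n + 1)) (e : ℝ) (H : (Fin (n + 1) → ℝ) → ℝ≥0∞)
    (hH : Measurable H) (hom : ∀ c : ℝ, 0 < c → ∀ x, H (c • x) = H x) :
    ∫⁻ r in Set.Ioi (0 : ℝ), gaussianPDF 0 1 r *
        ∫⁻ v, H (i.insertNth (r * e) v) ∂stdGauss n =
      ∫⁻ w, H (i.insertNth e w) * coneDensity n w := by
  have hm := measurable_gaussianPDF 0 1
  have hins := measurable_insertNth (n := n) i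
  have hHe : Measurable fun w : Fin n → ℝ => H (i.insertNth e w) :=
    hH.comp (hins.comp (measurable_const.prodMk measurable_id))
  have hstep : ∀ r ∈ Set.Ioi (0 : ℝ), gaussianPDF 0 1 r *
        ∫⁻ v, H (i.insertNth (r * e) v) ∂stdGauss n =
      ∫⁻ w, H (i.insertNth e w) * (ENNReal.ofReal (r ^ n) *
    (gaussianPDF 0 1 r * ∏ k, gaussianPDF 0 1 (r * w k))) := by
    intro r hr
    have hr' : (0 : ℝ) < r := hr
    rw [lintegral_stdGauss n (fun v => H (i.insertNth (r * e) v)) (hH.comp (hins.comp (measurable_const.prodMk measurable_id))),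
      lintegral_comp_smul_pi hr'.ne', abs_of_pos hr', ← lintegral_const_mul' _ _ ENNReal.ofReal_ne_top,
      ← lintegral_const_mul]
    · refine lintegral_congr fun w => ?_
      have : (i.insertNth (r * e) (r • w) : Fin (n + 1) → ℝ) = r • (i.insertNth e w) := by
        funext k
        induction k using Fin.succAboveCases i with
        | x => simp
        | p k => simp
      rw [this, hom r hr']
      simp only [Pi.smul_apply, smul_eq_mul]
      ring
    · have h2 : Measurable fun w : Fin n → ℝ => H (i.insertNth (r * e) (r • w)) :=
        hH.comp (hins.comp (measurable_const.prodMk (measurable_const_smul r)))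
      fun_prop
  rw [setLIntegral_congr_fun measurableSet_Ioi hstep, lintegral_lintegral_swap]
  · refine lintegral_congr fun w => ?_
    rw [lintegral_const_mul]
    · rfl
    · fun_prop
  · apply Measurable.aemeasurable
    have h3 : Measurable fun p : ℝ × (Fin n → ℝ) => H (i.insertNth e p.2) := hHe.comp measurable_snd
    change Measurable fun p : ℝ × (Fin n → ℝ) => H (i.insertNth e p.2) * (ENNReal.ofReal (p.1 ^ n) *
      (gaussianPDF 0 1 p.1 * ∏ k, gaussianPDF 0 1 (p.1 * p.2 k)))
    fun_prop

/-- The half-open cube `[-1,1)^n`, which is a face of `[-1,1]^(n+1)` up to a null set. -/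
def faceCube (n : ℕ) : Set (Fin n → ℝ) := Set.univ.pi fun _ => Set.Ico (-1) 1

theorem measurableSet_faceCube (n : ℕ) : MeasurableSet (faceCube n) :=
  MeasurableSet.univ_pi fun _ => measurableSet_Ico

theorem ae_abs_ne_one (n : ℕ) : ∀ᵐ w : Fin n → ℝ, ∀ k, |w k| ≠ 1 := by
  rw [ae_all_iff]
  intro k
  have h1 : ∀ c : ℝ, ∀ᵐ w : Fin n → ℝ, w k ≠ c := fun c => by
    rw [volume_pi]; exact Measure.ae_eval_ne (fun _ : Fin n => (volume : Measure ℝ)) k c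
  filter_upwards [h1 1, h1 (-1)] with w ha hb h
  rcases eq_or_eq_neg_of_abs_eq h with h | h
  · exact ha h
  · exact hb h

/-- Radial projection of the Gaussian measure onto the faces of the cube: the integral of a function
that is homogeneous of degree zero is a sum over the `2(n+1)` faces, each with density
`coneDensity`. -/
theorem lintegral_stdGauss_faces {n : ℕ} (H : (Fin (n + 1) → ℝ) → ℝ≥0∞)
    (hH : Measurable H) (hom : ∀ c : ℝ, 0 < c → ∀ x, H (c • x) = H x) :
    ∫⁻ x, H x ∂stdGauss (n + 1) =
      ∑ i : Fin (n + 1), ((∫⁻ w in faceCube n, H (i.insertNth 1 w) * coneDensity n w) +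
        ∫⁻ w in faceCube n, H (i.insertNth (-1) w) * coneDensity n w) := by
  let A : Fin (n + 1) → Set (Fin (n + 1) → ℝ) := fun i => {x | faceIdxN x = i}
  have hA : ∀ i, MeasurableSet (A i) := fun i =>
    measurable_faceIdxN (measurableSet_singleton (i : ℕ))
  have hU : ⋃ i, A i = Set.univ :=
    Set.eq_univ_of_forall fun x => Set.mem_iUnion.2 (exists_faceIdxN_eq x)
  have hd : Pairwise (Function.onFun Disjoint A) := by
    intro i j hij
    refine Set.disjoint_left.2 fun x hi hj => hij (Fin.ext ?_)
    rw [← show faceIdxN x = i from hi, show faceIdxN x = j from hj]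
  rw [← setLIntegral_univ, ← hU, lintegral_iUnion hA hd, tsum_fintype]
  refine Finset.sum_congr rfl fun i _ => ?_
  rw [← lintegral_indicator (hA i)]
  set Hi := (A i).indicator H with hHi
  have hHim : Measurable Hi := hH.indicator (hA i)
  have hHihom : ∀ c : ℝ, 0 < c → ∀ x, Hi (c • x) = Hi x := by
    intro c hc x
    have hmem : c • x ∈ A i ↔ x ∈ A i := by
      change faceIdxN (c • x) = i ↔ faceIdxN x = i
      rw [faceIdxN_smul hc]
    by_cases hx : x ∈ A i
    · rw [hHi, Set.indicator_of_mem hx, Set.indicator_of_mem (hmem.2 hx), hom c hc]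
    · rw [hHi, Set.indicator_of_notMem hx, Set.indicator_of_notMem (mt hmem.1 hx)]
  have hface : ∀ e : ℝ, |e| = 1 → ∫⁻ w, Hi (i.insertNth e w) * coneDensity n w =
      ∫⁻ w in faceCube n, H (i.insertNth e w) * coneDensity n w := by
    intro e he
    rw [← lintegral_indicator (measurableSet_faceCube n)]
    refine lintegral_congr_ae ?_
    filter_upwards [ae_abs_ne_one n] with w hw
    by_cases hlt : ∀ k, |w k| < 1
    · have h1 : w ∈ faceCube n := fun k _ => ⟨(abs_lt.1 (hlt k)).1.le, (abs_lt.1 (hlt k)).2⟩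
      have h2 : (i.insertNth e w : Fin (n + 1) → ℝ) ∈ A i := (faceIdxN_insertNth i he hlt).2
      rw [Set.indicator_of_mem h1, hHi, Set.indicator_of_mem h2]
    · have h1 : w ∉ faceCube n := by
        intro h
        refine hlt fun k => lt_of_le_of_ne (abs_le.2 ⟨(h k trivial).1, (h k trivial).2.le⟩) (hw k)
      have h2 : (i.insertNth e w : Fin (n + 1) → ℝ) ∉ A i := by
        intro h
        have h3 := ((faceIdxN_eq_iff _ _).1 h).1
        refine hlt fun k => lt_of_le_of_ne ?_ (hw k)
        have h4 := abs_le_normInf (i.insertNth e w : Fin (n + 1) → ℝ) (i.succAbove k)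
        rwa [← h3, Fin.insertNth_apply_succAbove, Fin.insertNth_apply_same, he] at h4
      rw [Set.indicator_of_notMem h1, hHi, Set.indicator_of_notMem h2, zero_mul]
  rw [← hface 1 (by simp), ← hface (-1) (by simp), ← lintegral_half_cone i 1 Hi hHim hHihom,
    ← lintegral_half_cone i (-1) Hi hHim hHihom]
  have hp := (measurePreserving_piFinSuccAbove (fun _ : Fin (n + 1) => gaussianReal 0 1) i).symm
  have hins := measurable_insertNth (n := n) i
  have hmeas : Measurable fun p : ℝ × (Fin n → ℝ) => Hi (i.insertNth p.1 p.2) := hHim.comp hins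
  have h1 : ∫⁻ x, Hi x ∂stdGauss (n + 1) =
      ∫⁻ p : ℝ × (Fin n → ℝ), Hi (i.insertNth p.1 p.2) ∂((gaussianReal 0 1).prod (stdGauss n)) :=
    (hp.lintegral_comp_emb (MeasurableEquiv.measurableEmbedding _) Hi).symm
  rw [h1, lintegral_prod _ hmeas.aemeasurable,
    lintegral_gaussianReal_split _ hmeas.lintegral_prod_right']
  simp only [mul_one, mul_neg]

/-! ### Near-independence of truncation and digits -/

/-- Radial projection to the Euclidean unit sphere (with value `0` at `0`). -/
def toSphere {m : ℕ} (x : Fin m → ℝ) : Fin m → ℝ := (Real.sqrt (∑ i, x i ^ 2))⁻¹ • x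

theorem measurable_toSphere {m : ℕ} : Measurable (toSphere : (Fin m → ℝ) → Fin m → ℝ) := by
  unfold toSphere
  refine measurable_pi_lambda _ fun k => ?_
  simp only [Pi.smul_apply, smul_eq_mul]
  fun_prop

/-- The truncated cube point: all coordinates of `ν_∞(u)` but the face coordinate are truncated. -/
def truncCube {n : ℕ} (Q : ℕ) (u : Fin (n + 1) → ℝ) : Fin (n + 1) → ℝ := fun k =>
  if k.val = faceIdxN (nuInf u) then nuInf u k else truncQ Q (nuInf u k)

/-- The remaining digits, in `[0,1)^n`, of the non-face coordinates of `ν_∞(u)`. -/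
def digits {n : ℕ} (Q : ℕ) (u : Fin (n + 1) → ℝ) : Fin n → ℝ := fun j =>
  let x := nuInf u
  let k := if j.val < faceIdxN x then j.val else j.val + 1
  if h : k < n + 1 then (x ⟨k, h⟩ - truncQ Q (x ⟨k, h⟩)) * Q else 0

theorem truncSphere_eq (m Q : ℕ) (u : Fin (2 * (m + 1)) → ℝ) :
    truncSphere (m + 1) Q u = toSphere (truncCube (n := 2 * m + 1) Q u) := rfl

theorem fracSphere_eq (m Q : ℕ) (u : Fin (2 * (m + 1)) → ℝ) :
    fracSphere (m + 1) Q u = sibuya (m + 1) (digits (n := 2 * m + 1) Q u) := rfl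

theorem digits_eq {n : ℕ} (Q : ℕ) (u : Fin (n + 1) → ℝ) (j : Fin n) :
    digits Q u j = if j.val < faceIdxN (nuInf u)
      then (nuInf u j.castSucc - truncQ Q (nuInf u j.castSucc)) * Q
      else (nuInf u j.succ - truncQ Q (nuInf u j.succ)) * Q := by
  unfold digits
  have := j.2
  dsimp only
  split_ifs <;> first | rfl | omega

theorem measurable_truncQ (Q : ℕ) : Measurable (truncQ Q) := by
  unfold truncQ
  have h1 : Measurable fun a : ℝ => ((⌊(Q : ℝ) * a⌋ : ℤ) : ℝ) :=
    (measurable_from_top (f := fun z : ℤ => (z : ℝ))).comp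
      (Int.measurable_floor.comp (measurable_const_mul (Q : ℝ)))
  exact h1.div_const _

theorem measurable_nuInf {n : ℕ} : Measurable (nuInf : (Fin (n + 1) → ℝ) → Fin (n + 1) → ℝ) :=
  measurable_pi_lambda _ fun k => (measurable_pi_apply k).div measurable_normInf

theorem measurable_truncCube {n : ℕ} (Q : ℕ) :
    Measurable (truncCube Q : (Fin (n + 1) → ℝ) → Fin (n + 1) → ℝ) := by
  refine measurable_pi_lambda _ fun k => ?_
  have hx : Measurable fun u : Fin (n + 1) → ℝ => nuInf u k :=
    (measurable_pi_apply k).comp measurable_nuInf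
  refine Measurable.ite ?_ hx ((measurable_truncQ Q).comp hx)
  exact measurableSet_eq_fun measurable_const (measurable_faceIdxN.comp measurable_nuInf)

theorem measurable_digits {n : ℕ} (Q : ℕ) :
    Measurable (digits Q : (Fin (n + 1) → ℝ) → Fin n → ℝ) := by
  refine measurable_pi_lambda _ fun j => ?_
  have hx : ∀ k, Measurable fun u : Fin (n + 1) → ℝ => (nuInf u k - truncQ Q (nuInf u k)) * Q :=
    fun k => by
      have h1 : Measurable fun u : Fin (n + 1) → ℝ => nuInf u k :=
        (measurable_pi_apply k).comp measurable_nuInf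
      exact (h1.sub ((measurable_truncQ Q).comp h1)).mul_const _
  simp only [digits_eq]
  refine Measurable.ite ?_ (hx _) (hx _)
  exact measurableSet_lt measurable_const (measurable_faceIdxN.comp measurable_nuInf)

theorem truncCube_insertNth {n : ℕ} (Q : ℕ) (i : Fin (n + 1)) {e : ℝ} (he : |e| = 1)
    {w : Fin n → ℝ} (hw : ∀ k, |w k| < 1) :
    truncCube Q (i.insertNth e w : Fin (n + 1) → ℝ) =
      i.insertNth e fun k => (⌊(Q : ℝ) * w k⌋ : ℝ) / Q := by
  obtain ⟨h1, h2⟩ := faceIdxN_insertNth i he hw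
  funext k
  simp only [truncCube, nuInf_eq_self h1, h2]
  induction k using Fin.succAboveCases i with
  | x => simp
  | p k =>
    rw [if_neg fun h => Fin.succAbove_ne i k (Fin.ext h)]
    simp [truncQ]

theorem digits_insertNth {n Q : ℕ} (hQ : 1 ≤ Q) (i : Fin (n + 1)) {e : ℝ} (he : |e| = 1)
    {w : Fin n → ℝ} (hw : ∀ k, |w k| < 1) :
    digits Q (i.insertNth e w : Fin (n + 1) → ℝ) = fun k => Int.fract ((Q : ℝ) * w k) := by
  obtain ⟨h1, h2⟩ := faceIdxN_insertNth i he hw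
  have hq : (Q : ℝ) ≠ 0 := by exact_mod_cast (by omega : Q ≠ 0)
  have key : ∀ a : ℝ, (a - truncQ Q a) * Q = Int.fract ((Q : ℝ) * a) := by
    intro a
    rw [truncQ, Int.fract]
    field_simp
  funext j
  rw [digits_eq, nuInf_eq_self h1, h2]
  split_ifs with h
  · rw [key, ← Fin.succAbove_of_castSucc_lt i j h, Fin.insertNth_apply_succAbove]
  · rw [key, ← Fin.succAbove_of_le_castSucc i j (not_lt.1 h), Fin.insertNth_apply_succAbove]

theorem truncCube_smul {n Q : ℕ} {c : ℝ} (hc : 0 < c) (x : Fin (n + 1) → ℝ) :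
    truncCube Q (c • x) = truncCube Q x := by
  unfold truncCube; rw [nuInf_smul hc]

theorem digits_smul {n Q : ℕ} {c : ℝ} (hc : 0 < c) (x : Fin (n + 1) → ℝ) :
    digits Q (c • x) = digits Q x := by
  unfold digits; rw [nuInf_smul hc]

/-- For a Gaussian vector, the digits beyond precision `Q` are uniform on the cube and independent
of the truncation, up to the factor by which `coneDensity` oscillates on cells of side `1/Q`. -/
theorem lintegral_truncCube_digits_le {n Q : ℕ} (hQ : 1 ≤ Q) (C : ℝ≥0∞)
    (hC : ∀ w w' : Fin n → ℝ, (∀ k, ⌊(Q : ℝ) * w k⌋ = ⌊(Q : ℝ) * w' k⌋) →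
      coneDensity n w ≤ C * coneDensity n w')
    (F : (Fin (n + 1) → ℝ) → (Fin n → ℝ) → ℝ≥0∞) (hF : Measurable (Function.uncurry F)) :
    ∫⁻ g, F (truncCube Q g) (digits Q g) ∂stdGauss (n + 1) ≤
      C * ∫⁻ g, ∫⁻ y, F (truncCube Q g) y ∂cubeMeasure n ∂stdGauss (n + 1) := by
  have hF1 : Measurable fun g : Fin (n + 1) → ℝ => F (truncCube Q g) (digits Q g) :=
    hF.comp ((measurable_truncCube Q).prodMk (measurable_digits Q))
  have hF2 : Measurable fun a : Fin (n + 1) → ℝ => ∫⁻ y, F a y ∂cubeMeasure n :=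
    hF.lintegral_prod_right'
  have hF3 : Measurable fun g : Fin (n + 1) → ℝ => ∫⁻ y, F (truncCube Q g) y ∂cubeMeasure n :=
    hF2.comp (measurable_truncCube (n := n) Q)
  rw [lintegral_stdGauss_faces _ hF1 fun c hc x => by rw [truncCube_smul hc, digits_smul hc],
    lintegral_stdGauss_faces _ hF3 fun c hc x => by
      rw [truncCube_smul hc], Finset.mul_sum]
  have hq : (0 : ℝ) < Q := by exact_mod_cast hQ
  have hface : ∀ (i : Fin (n + 1)) (e : ℝ), |e| = 1 →
      ∫⁻ w in faceCube n, F (truncCube Q (i.insertNth e w)) (digits Q (i.insertNth e w)) *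
          coneDensity n w ≤
      C * ∫⁻ w in faceCube n, (∫⁻ y, F (truncCube Q (i.insertNth e w)) y ∂cubeMeasure n) *
          coneDensity n w := by
    intro i e he
    classical
    -- membership of `w` in the face depends only on the integer parts of `Q w`
    let h : (Fin n → ℤ) → (Fin n → ℝ) → ℝ≥0∞ := fun j y =>
      if ∀ k, -(Q : ℤ) ≤ j k ∧ j k < Q
      then F (i.insertNth e fun k => (j k : ℝ) / Q) y else 0
    have hh : ∀ j, Measurable (h j) := by
      intro j
      by_cases hj : ∀ k, -(Q : ℤ) ≤ j k ∧ j k < Q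
      · simp only [h, if_pos hj]
        exact hF.comp (measurable_const.prodMk measurable_id)
      · simp only [h, if_neg hj]
        exact measurable_const
    have hmem : ∀ w : Fin n → ℝ, w ∈ faceCube n ↔
        ∀ k, -(Q : ℤ) ≤ ⌊(Q : ℝ) * w k⌋ ∧ ⌊(Q : ℝ) * w k⌋ < Q := by
      intro w
      simp only [faceCube, Set.mem_univ_pi, Set.mem_Ico]
      refine forall_congr' fun k => and_congr ?_ ?_
      · rw [Int.le_floor]; push_cast
        constructor <;> intro h <;> nlinarith
      · rw [Int.floor_lt]; push_cast
        constructor <;> intro h <;> nlinarith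
    have hlt : ∀ w : Fin n → ℝ, w ∈ faceCube n → (∀ k, |w k| ≠ 1) → ∀ k, |w k| < 1 :=
      fun w hw hne k => lt_of_le_of_ne
        (abs_le.2 ⟨(hw k trivial).1, (hw k trivial).2.le⟩) (hne k)
    have hL : ∫⁻ w in faceCube n, F (truncCube Q (i.insertNth e w)) (digits Q (i.insertNth e w)) *
          coneDensity n w =
        ∫⁻ w, h (fun k => ⌊(Q : ℝ) * w k⌋) (fun k => Int.fract ((Q : ℝ) * w k)) *
          coneDensity n w := by
      rw [← lintegral_indicator (measurableSet_faceCube n)]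
      refine lintegral_congr_ae ?_
      filter_upwards [ae_abs_ne_one n] with w hw
      by_cases hwc : w ∈ faceCube n
      · have hl := hlt w hwc hw
        rw [Set.indicator_of_mem hwc, truncCube_insertNth Q i he hl, digits_insertNth hQ i he hl]
        simp only [h, if_pos ((hmem w).1 hwc)]
      · rw [Set.indicator_of_notMem hwc]
        simp only [h, if_neg (mt (hmem w).2 hwc), zero_mul]
    have hR : ∫⁻ w in faceCube n, (∫⁻ y, F (truncCube Q (i.insertNth e w)) y ∂cubeMeasure n) *
          coneDensity n w =
        ∫⁻ w, (∫⁻ y, h (fun k => ⌊(Q : ℝ) * w k⌋) y ∂cubeMeasure n) * coneDensity n w := by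
      rw [← lintegral_indicator (measurableSet_faceCube n)]
      refine lintegral_congr_ae ?_
      filter_upwards [ae_abs_ne_one n] with w hw
      by_cases hwc : w ∈ faceCube n
      · have hl := hlt w hwc hw
        rw [Set.indicator_of_mem hwc, truncCube_insertNth Q i he hl]
        simp only [h, if_pos ((hmem w).1 hwc)]
      · rw [Set.indicator_of_notMem hwc]
        simp only [h, if_neg (mt (hmem w).2 hwc), lintegral_zero, zero_mul]
    rw [hL, hR]
    exact lintegral_floor_fract_le hQ h hh _ (measurable_coneDensity n) C hC
  refine Finset.sum_le_sum fun i _ => ?_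
  rw [mul_add]
  exact add_le_add (hface i 1 (by simp)) (hface i (-1) (by simp))

/-! ### Proportions of exponentials and spacings of uniforms -/

/-- Successive differences `t_1, t_2 - t_1, …` of a finite sequence, starting from `t_0 = 0`. -/
def diffs {m : ℕ} (t : Fin m → ℝ) : Fin m → ℝ := fun i =>
  t i - (Fin.cons 0 t : Fin (m + 1) → ℝ) i.castSucc

/-- Partial sums, the inverse of `diffs`. -/
def psums {m : ℕ} (s : Fin m → ℝ) : Fin m → ℝ := fun i => ∑ j ∈ Finset.Iic i, s j

theorem measurable_diffs {m : ℕ} : Measurable (diffs : (Fin m → ℝ) → Fin m → ℝ) := by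
  refine measurable_pi_lambda _ fun i => (measurable_pi_apply i).sub ?_
  cases i.castSucc using Fin.cases with
  | zero => simp
  | succ j => simpa using measurable_pi_apply j

theorem diffs_smul {m : ℕ} (c : ℝ) (t : Fin m → ℝ) : diffs (c • t) = c • diffs t := by
  funext i
  have : ∀ j, (Fin.cons 0 (c • t) : Fin (m + 1) → ℝ) j = c * (Fin.cons 0 t : Fin (m + 1) → ℝ) j := by
    intro j
    cases j using Fin.cases <;> simp
  simp only [diffs, this, Pi.smul_apply, smul_eq_mul]
  ring

theorem diffs_psums {m : ℕ} (s : Fin m → ℝ) : diffs (psums s) = s := by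
  funext i
  cases m with
  | zero => exact i.elim0
  | succ m =>
    cases i using Fin.cases with
    | zero =>
      have : Finset.Iic (0 : Fin (m + 1)) = {0} := by ext j; simp
      simp [diffs, psums, this]
    | succ k =>
      have : Finset.Iic k.succ = insert k.succ (Finset.Iic k.castSucc) := by
        ext j
        simp only [Finset.mem_Iic, Finset.mem_insert, Fin.le_def, Fin.ext_iff, Fin.val_succ,
          Fin.val_castSucc]
        omega
      simp only [diffs, psums, ← Fin.succ_castSucc, Fin.cons_succ]
      rw [this, Finset.sum_insert (by simp [Fin.le_def])]
      ring

theorem measurePreserving_psums (m : ℕ) :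
    MeasurePreserving (psums : (Fin m → ℝ) → Fin m → ℝ) := by
  let M : Matrix (Fin m) (Fin m) ℝ := fun i j => if j ≤ i then 1 else 0
  have hdet : M.det = 1 := by
    rw [Matrix.det_of_isLowerTriangular M]
    · simp [M]
    · intro i j hij
      exact if_neg (not_le.2 hij)
  have hfun : (psums : (Fin m → ℝ) → Fin m → ℝ) = Matrix.toLin' M := by
    funext s i
    have : Finset.Iic i = Finset.univ.filter (· ≤ i) := by ext j; simp
    rw [Matrix.toLin'_apply, psums, this, Finset.sum_filter]
    simp [M, Matrix.mulVec, dotProduct]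
  refine ⟨?_, ?_⟩
  · rw [hfun]; exact (LinearMap.continuous_of_finiteDimensional _).measurable
  · rw [hfun, Real.map_matrix_volume_pi_eq_smul_volume_pi (by rw [hdet]; exact one_ne_zero), hdet]
    simp

/-- The sequence `0, t_1, …, t_m` is nondecreasing iff all differences are nonnegative. -/
theorem diffs_nonneg_iff {m : ℕ} (t : Fin m → ℝ) :
    (∀ i, 0 ≤ diffs t i) ↔ Monotone (Fin.cons 0 t : Fin (m + 1) → ℝ) := by
  rw [Fin.monotone_iff_le_succ]
  simp [diffs]

/-- Integration over the closed simplex of increasing sequences `0 ≤ y_1 ≤ … ≤ y_m ≤ 1`, through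
their spacings. -/
def spacingIntegral (m : ℕ) (K : (Fin (m + 1) → ℝ) → ℝ≥0∞) : ℝ≥0∞ :=
  open Classical in
  ∫⁻ y : Fin m → ℝ, if ∀ i, 0 ≤ diffs (Fin.snoc y 1 : Fin (m + 1) → ℝ) i
    then K (diffs (Fin.snoc y 1 : Fin (m + 1) → ℝ)) else 0

theorem measurable_snoc {m : ℕ} : Measurable fun p : ℝ × (Fin m → ℝ) =>
    (Fin.snoc p.2 p.1 : Fin (m + 1) → ℝ) := by
  have := measurable_insertNth (Fin.last m)
  simpa only [Fin.insertNth_last'] using this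

theorem measurableSet_diffs_nonneg (m : ℕ) :
    MeasurableSet {t : Fin m → ℝ | ∀ i, 0 ≤ diffs t i} := by
  have : {t : Fin m → ℝ | ∀ i, 0 ≤ diffs t i} = ⋂ i, {t | 0 ≤ diffs t i} := by ext; simp
  rw [this]
  exact MeasurableSet.iInter fun i => measurableSet_le measurable_const
    ((measurable_pi_apply i).comp measurable_diffs)

/-- The law of the proportions of i.i.d. exponential variables, up to a constant.  In the partial
sums `t`, the joint density depends on the total `t_{m+1}` only, and rescaling the other partial
sums by the total separates the two. -/
theorem lintegral_exp_proportions (m : ℕ) : ∃ c : ℝ≥0∞, ∀ K : (Fin (m + 1) → ℝ) → ℝ≥0∞,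
    Measurable K →
    ∫⁻ s, K ((∑ i, s i)⁻¹ • s) ∂(Measure.pi fun _ : Fin (m + 1) => expMeasure 1) =
      c * spacingIntegral m K := by
  classical
  refine ⟨∫⁻ T in Set.Ioi (0 : ℝ), ENNReal.ofReal (T ^ m) * ENNReal.ofReal (Real.exp (-T)),
    fun K hK => ?_⟩
  let G : (Fin (m + 1) → ℝ) → ℝ≥0∞ := fun t =>
    if ∀ i, 0 ≤ diffs t i then
      K ((t (Fin.last m))⁻¹ • diffs t) * ENNReal.ofReal (Real.exp (-t (Fin.last m))) else 0
  have hKG : Measurable fun t : Fin (m + 1) → ℝ => K ((t (Fin.last m))⁻¹ • diffs t) := by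
    refine hK.comp (measurable_pi_lambda _ fun i => ?_)
    have := (measurable_pi_apply i).comp (measurable_diffs (m := m + 1))
    exact (measurable_pi_apply (Fin.last m)).inv.mul this
  have hG : Measurable G :=
    Measurable.ite (measurableSet_diffs_nonneg _) (hKG.mul (by fun_prop)) measurable_const
  have hpdf : Measurable (exponentialPDF 1) := (measurable_exponentialPDFReal 1).ennreal_ofReal
  have h1 : expMeasure 1 = volume.withDensity (exponentialPDF 1) := rfl
  have : SigmaFinite (volume.withDensity (exponentialPDF 1)) := by
    rw [← h1]
    have := isProbabilityMeasure_expMeasure (r := 1) one_pos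
    infer_instance
  have hK1 : Measurable fun s : Fin (m + 1) → ℝ => K ((∑ i, s i)⁻¹ • s) := by
    refine hK.comp (measurable_pi_lambda _ fun i => ?_)
    simp only [Pi.smul_apply, smul_eq_mul]
    fun_prop
  rw [h1, pi_withDensity _ _ hpdf, lintegral_withDensity_eq_lintegral_mul _ (by fun_prop) hK1]
  have h2 : ∀ s : Fin (m + 1) → ℝ, ((fun x : Fin (m + 1) → ℝ => ∏ i, exponentialPDF 1 (x i)) *
      fun s : Fin (m + 1) → ℝ => K ((∑ i, s i)⁻¹ • s)) s = G (psums s) := by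
    intro s
    have hlast : psums s (Fin.last m) = ∑ i, s i := by
      have : Finset.Iic (Fin.last m) = Finset.univ := by ext j; simp [Fin.le_last]
      simp [psums, this]
    simp only [Pi.mul_apply, G, diffs_psums, hlast]
    split_ifs with h
    · rw [mul_comm, ← Finset.sum_neg_distrib, Real.exp_sum,
        ENNReal.ofReal_prod_of_nonneg fun i _ => (Real.exp_pos _).le]
      congr 1
      refine Finset.prod_congr rfl fun i _ => ?_
      rw [exponentialPDF_eq, if_pos (h i)]; simp
    · push Not at h
      obtain ⟨i, hi⟩ := h
      rw [Finset.prod_eq_zero (Finset.mem_univ i), zero_mul]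
      rw [exponentialPDF_eq, if_neg (not_le.2 hi)]; simp
  simp only [h2]
  rw [← volume_pi, (measurePreserving_psums (m + 1)).lintegral_comp hG]
  have hp := (volume_preserving_piFinSuccAbove (fun _ : Fin (m + 1) => ℝ) (Fin.last m)).symm
  have h3 : ∫⁻ t, G t = ∫⁻ p : ℝ × (Fin m → ℝ), G (Fin.snoc p.2 p.1 : Fin (m + 1) → ℝ) := by
    rw [← hp.lintegral_comp_emb (MeasurableEquiv.measurableEmbedding _)]
    refine lintegral_congr fun p => ?_
    rw [← Fin.insertNth_last']
    rfl
  have hGs : Measurable fun p : ℝ × (Fin m → ℝ) => G (Fin.snoc p.2 p.1 : Fin (m + 1) → ℝ) :=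
    hG.comp measurable_snoc
  rw [h3, Measure.volume_eq_prod, lintegral_prod _ hGs.aemeasurable,
    ← lintegral_mul_const _ (by fun_prop), ← lintegral_indicator measurableSet_Ioi]
  refine lintegral_congr_ae ?_
  have h0 : ∀ᵐ T : ℝ, T ≠ 0 := by simp [ae_iff]
  filter_upwards [h0] with T hT
  rcases lt_or_gt_of_ne hT with hT | hT
  · rw [Set.indicator_of_notMem (by simpa using hT.le)]
    refine (lintegral_congr fun v => ?_).trans lintegral_zero
    refine if_neg fun h => not_le.2 hT ?_
    have := (diffs_nonneg_iff _).1 h (Fin.zero_le (Fin.last m).succ)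
    simpa using this
  · rw [Set.indicator_of_mem (show T ∈ Set.Ioi 0 from hT), lintegral_comp_smul_pi hT.ne',
      abs_of_pos hT, mul_assoc]
    congr 1
    rw [spacingIntegral, ← lintegral_const_mul' _ _ ENNReal.ofReal_ne_top]
    refine lintegral_congr fun y => ?_
    have hs : (Fin.snoc (T • y) T : Fin (m + 1) → ℝ) = T • (Fin.snoc y 1) := by
      funext k
      cases k using Fin.lastCases <;> simp
    simp only [G, hs, diffs_smul, Pi.smul_apply, smul_eq_mul, Fin.snoc_last, mul_one,
      smul_smul, inv_mul_cancel₀ hT.ne', one_smul, mul_nonneg_iff_of_pos_left hT]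
    split_ifs
    · rw [mul_comm]
    · rw [mul_zero]

/-- The increasing rearrangement of a finite real sequence. -/
def sorted {m : ℕ} (y : Fin m → ℝ) : Fin m → ℝ := fun k => y (Tuple.sort y k)

theorem measurableSet_sort_eq {m : ℕ} (σ : Equiv.Perm (Fin m)) :
    MeasurableSet {y : Fin m → ℝ | Tuple.sort y = σ} := by
  have : {y : Fin m → ℝ | Tuple.sort y = σ} =
      (⋂ i, ⋂ j, ⋂ _ : i ≤ j, {y | y (σ i) ≤ y (σ j)}) ∩
        ⋂ i, ⋂ j, ⋂ _ : i < j, ⋂ _ : ¬ σ i < σ j, {y | y (σ i) = y (σ j)}ᶜ := by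
    ext y
    have h : Tuple.sort y = σ ↔ _ := eq_comm.trans (Tuple.eq_sort_iff (f := y) (σ := σ))
    simp only [Set.mem_ofPred_eq, h, Set.mem_inter_iff, Set.mem_iInter, Set.mem_compl_iff]
    refine and_congr Iff.rfl ?_
    exact forall₃_congr fun i j _ => ⟨fun h1 h2 h3 => h2 (h1 h3), fun h1 h2 => by_contra fun h3 => h1 h3 h2⟩
  rw [this]
  refine MeasurableSet.inter ?_ ?_
  · exact MeasurableSet.iInter fun i => MeasurableSet.iInter fun j => MeasurableSet.iInter fun _ =>
      measurableSet_le (measurable_pi_apply _) (measurable_pi_apply _)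
  · exact MeasurableSet.iInter fun i => MeasurableSet.iInter fun j => MeasurableSet.iInter fun _ =>
      MeasurableSet.iInter fun _ =>
      (measurableSet_eq_fun (measurable_pi_apply (σ i)) (measurable_pi_apply (σ j))).compl

theorem measurable_sorted {m : ℕ} : Measurable (sorted : (Fin m → ℝ) → Fin m → ℝ) := by
  refine measurable_pi_lambda _ fun k => ?_
  let _ : MeasurableSpace (Equiv.Perm (Fin m)) := ⊤
  have _ : MeasurableSingletonClass (Equiv.Perm (Fin m)) := ⟨fun _ => trivial⟩
  have h1 : Measurable fun y : Fin m → ℝ => Tuple.sort y :=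
    measurable_to_countable' fun σ => measurableSet_sort_eq σ
  have h2 : Measurable fun p : (Fin m → ℝ) × Equiv.Perm (Fin m) => p.1 (p.2 k) :=
    measurable_from_prod_countable_left fun σ => measurable_pi_apply (σ k)
  exact h2.comp (measurable_id.prodMk h1)

theorem ae_injective (m : ℕ) : ∀ᵐ y : Fin m → ℝ, Function.Injective y := by
  have h : ∀ i j : Fin m, i ≠ j → ∀ᵐ y : Fin m → ℝ, y i ≠ y j := by
    intro i j hij
    let S : Submodule ℝ (Fin m → ℝ) := LinearMap.ker
      (LinearMap.proj (R := ℝ) (φ := fun _ : Fin m => ℝ) i - LinearMap.proj j)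
    have hS : S ≠ ⊤ := by
      intro h
      have h1 : (Pi.single i 1 : Fin m → ℝ) ∈ S := by rw [h]; trivial
      simp [S, LinearMap.mem_ker, hij.symm] at h1
    refine measure_mono_null (fun y hy => ?_) (Measure.addHaar_submodule volume S hS)
    have : y i = y j := by simpa using hy
    simp [S, LinearMap.mem_ker, this]
  have h' : ∀ᵐ y : Fin m → ℝ, ∀ i j : Fin m, i ≠ j → y i ≠ y j := by
    simp only [ae_all_iff]
    exact h
  filter_upwards [h'] with y hy i j hij
  exact by_contra fun hne => hy i j hne hij

/-- The law of the spacings of i.i.d. uniform variables, up to a constant: each of the `m` factorial orderings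
of the points contributes the same integral. -/
theorem lintegral_uniform_spacings (m : ℕ) : ∃ c : ℝ≥0∞, ∀ K : (Fin (m + 1) → ℝ) → ℝ≥0∞,
    Measurable K →
    ∫⁻ y, K (diffs (Fin.snoc (sorted y) 1 : Fin (m + 1) → ℝ)) ∂cubeMeasure m =
      c * spacingIntegral m K := by
  classical
  refine ⟨Fintype.card (Equiv.Perm (Fin m)), fun K hK => ?_⟩
  let A : Equiv.Perm (Fin m) → Set (Fin m → ℝ) := fun σ => {y | Tuple.sort y = σ}
  have hU : ⋃ σ, A σ = Set.univ := Set.eq_univ_of_forall fun y => Set.mem_iUnion.2 ⟨_, rfl⟩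
  have hd : Pairwise (Function.onFun Disjoint A) := by
    intro σ τ hne
    refine Set.disjoint_left.2 fun x hi hj => hne ?_
    rw [← show Tuple.sort x = σ from hi, show Tuple.sort x = τ from hj]
  rw [← setLIntegral_univ, ← hU, lintegral_iUnion (fun σ => measurableSet_sort_eq σ) hd,
    tsum_fintype]
  have hpiece : ∀ σ, ∫⁻ y in A σ, K (diffs (Fin.snoc (sorted y) 1 : Fin (m + 1) → ℝ)) ∂cubeMeasure m
      = spacingIntegral m K := by
    intro σ
    rw [cubeMeasure_eq_restrict, Measure.restrict_restrict (measurableSet_sort_eq σ),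
      ← lintegral_indicator
        ((measurableSet_sort_eq σ).inter (MeasurableSet.univ_pi fun _ => measurableSet_Ico)),
      spacingIntegral]
    have hp := volume_measurePreserving_piCongrLeft (fun _ : Fin m => ℝ) σ
    rw [← hp.lintegral_comp_emb (MeasurableEquiv.measurableEmbedding _)]
    refine lintegral_congr_ae ?_
    have h1 : ∀ᵐ w : Fin m → ℝ, ∀ k, w k ≠ 1 := by
      filter_upwards [ae_abs_ne_one m] with w hw k hk
      exact hw k (by rw [hk]; simp)
    filter_upwards [ae_injective m, h1] with z hinj hne
    set y := MeasurableEquiv.piCongrLeft (fun _ : Fin m => ℝ) σ z with hy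
    have hyz : ∀ k, y (σ k) = z k := fun k => by
      rw [hy, MeasurableEquiv.coe_piCongrLeft, Equiv.piCongrLeft_apply_apply]
    have hiff : y ∈ A σ ∩ Set.univ.pi (fun _ => Set.Ico 0 1) ↔
        ∀ i, 0 ≤ diffs (Fin.snoc z 1 : Fin (m + 1) → ℝ) i := by
      rw [diffs_nonneg_iff]
      constructor
      · rintro ⟨hs, hc⟩
        have hmono : Monotone z := by
          have := (Tuple.eq_sort_iff.1 (show Tuple.sort y = σ from hs).symm).1
          intro i j hij
          simpa [hyz] using this hij
        have hz : ∀ k, 0 ≤ z k ∧ z k < 1 := fun k => by rw [← hyz]; exact hc (σ k) trivial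
        intro i j hij
        cases i using Fin.cases with
        | zero =>
          cases j using Fin.cases with
          | zero => exact le_rfl
          | succ j =>
            cases j using Fin.lastCases with
            | last => simp
            | cast j => simpa using (hz j).1
        | succ i =>
          cases j using Fin.cases with
          | zero => simp at hij
          | succ j =>
            rw [Fin.succ_le_succ_iff] at hij
            simp only [Fin.cons_succ]
            cases j using Fin.lastCases with
            | last =>
              cases i using Fin.lastCases with
              | last => exact le_rfl
              | cast i => simpa using (hz i).2.le
            | cast j =>
              cases i using Fin.lastCases with
              | last => exact absurd hij (not_le.2 (Fin.castSucc_lt_last j))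
              | cast i => simpa using hmono (Fin.castSucc_le_castSucc_iff.1 hij)
      · intro hmono
        have hz : ∀ k, z k = (Fin.cons 0 (Fin.snoc z 1 : Fin (m + 1) → ℝ) : Fin (m + 2) → ℝ)
            k.castSucc.succ := fun k => by simp
        refine ⟨?_, ?_⟩
        · change Tuple.sort y = σ
          refine (Tuple.eq_sort_iff.2 ⟨fun i j hij => ?_, fun i j hij h => ?_⟩).symm
          · simp only [Function.comp, hyz]
            rw [hz i, hz j]
            exact hmono (Fin.succ_le_succ_iff.2 (Fin.castSucc_le_castSucc_iff.2 hij))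
          · rw [hyz, hyz] at h
            exact absurd (hinj h) hij.ne
        · intro k _
          rw [← σ.apply_symm_apply k, hyz]
          refine ⟨?_, lt_of_le_of_ne ?_ (hne _)⟩
          · rw [hz]
            simpa using hmono (Fin.zero_le (σ.symm k).castSucc.succ)
          · rw [hz]
            simpa using hmono (Fin.le_last (σ.symm k).castSucc.succ)
    by_cases h : y ∈ A σ ∩ Set.univ.pi (fun _ => Set.Ico 0 1)
    · have hsort : sorted y = z := by
        funext k
        rw [sorted, show Tuple.sort y = σ from h.1, hyz]
      rw [Set.indicator_of_mem h, if_pos (hiff.1 h), hsort]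
    · rw [Set.indicator_of_notMem h, if_neg (mt hiff.2 h)]
  rw [Finset.sum_congr rfl fun σ _ => hpiece σ]
  simp

/-- Proportions of i.i.d. exponential variables and spacings of i.i.d. uniform variables have the
same law. -/
theorem lintegral_proportions_eq_spacings (m : ℕ) (K : (Fin (m + 1) → ℝ) → ℝ≥0∞)
    (hK : Measurable K) :
    ∫⁻ s, K ((∑ i, s i)⁻¹ • s) ∂(Measure.pi fun _ : Fin (m + 1) => expMeasure 1) =
      ∫⁻ y, K (diffs (Fin.snoc (sorted y) 1 : Fin (m + 1) → ℝ)) ∂cubeMeasure m := by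
  obtain ⟨c, hc⟩ := lintegral_exp_proportions m
  obtain ⟨c', hc'⟩ := lintegral_uniform_spacings m
  have := isProbabilityMeasure_expMeasure (r := 1) one_pos
  have h1 := hc (fun _ => 1) measurable_const
  have h2 := hc' (fun _ => 1) measurable_const
  simp only [lintegral_one, measure_univ] at h1 h2
  rw [hc K hK, hc' K hK, ENNReal.eq_inv_of_mul_eq_one_left h1.symm,
    ENNReal.eq_inv_of_mul_eq_one_left h2.symm]

/-! ### The Box–Muller map -/

instance : IsProbabilityMeasure (expMeasure 1) := isProbabilityMeasure_expMeasure one_pos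

/-- Substitution `s = r²/2`, which makes the exponential law the radial part of a planar Gaussian. -/
theorem lintegral_expMeasure (g : ℝ → ℝ≥0∞) (hg : Measurable g) :
    ∫⁻ s, g s ∂expMeasure 1 =
      ∫⁻ r in Set.Ioi (0 : ℝ), ENNReal.ofReal r *
        (ENNReal.ofReal (Real.exp (-(r ^ 2 / 2))) * g (r ^ 2 / 2)) := by
  have hpdf : Measurable (exponentialPDF 1) := (measurable_exponentialPDFReal 1).ennreal_ofReal
  have himg : (fun r : ℝ => r ^ 2 / 2) '' Set.Ioi 0 = Set.Ioi 0 := by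
    ext s
    constructor
    · rintro ⟨r, hr, rfl⟩
      have : (0 : ℝ) < r := hr
      exact (by positivity : 0 < r ^ 2 / 2)
    · intro hs
      have hs' : (0 : ℝ) < s := hs
      refine ⟨Real.sqrt (2 * s), Real.sqrt_pos.2 (by positivity), ?_⟩
      simp only
      rw [Real.sq_sqrt (by positivity)]; ring
  have hinj : Set.InjOn (fun r : ℝ => r ^ 2 / 2) (Set.Ioi 0) := by
    intro a ha b hb hab
    have ha' : (0 : ℝ) < a := ha
    have hb' : (0 : ℝ) < b := hb
    simp only at hab
    nlinarith
  have hder : ∀ r ∈ Set.Ioi (0 : ℝ), HasDerivWithinAt (fun r : ℝ => r ^ 2 / 2) r (Set.Ioi 0) r := by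
    intro r _
    have := ((hasDerivAt_pow 2 r).div_const 2).hasDerivWithinAt (s := Set.Ioi 0)
    have h2 : ((2 : ℕ) : ℝ) * r ^ (2 - 1) / 2 = r := by simp
    rwa [h2] at this
  have key := lintegral_image_eq_lintegral_abs_deriv_mul measurableSet_Ioi hder hinj
    (fun s => ENNReal.ofReal (Real.exp (-s)) * g s)
  rw [himg] at key
  have hL : ∫⁻ s, g s ∂expMeasure 1 = ∫⁻ s in Set.Ioi 0, ENNReal.ofReal (Real.exp (-s)) * g s := by
    change ∫⁻ s, g s ∂(volume.withDensity (exponentialPDF 1)) = _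
    rw [lintegral_withDensity_eq_lintegral_mul _ hpdf hg, ← lintegral_indicator measurableSet_Ioi]
    refine lintegral_congr_ae ?_
    have h0 : ∀ᵐ T : ℝ, T ≠ 0 := by simp [ae_iff]
    filter_upwards [h0] with s hs
    rw [Pi.mul_apply, exponentialPDF_eq]
    rcases lt_or_gt_of_ne hs with h | h
    · rw [if_neg (not_le.2 h), Set.indicator_of_notMem (by simpa using h.le)]; simp
    · rw [if_pos h.le, Set.indicator_of_mem (show s ∈ Set.Ioi 0 from h)]; simp
  rw [hL, key]
  refine setLIntegral_congr_fun measurableSet_Ioi fun r hr => ?_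
  rw [abs_of_pos (show (0 : ℝ) < r from hr)]

/-- Substitution matching the unit interval with the angular range `(-π, π)` of polar coordinates. -/
theorem lintegral_unit_angle (g : ℝ → ℝ≥0∞) :
    ∫⁻ t in Set.Ico (0 : ℝ) 1, g t =
      ∫⁻ a in Set.Ioo (-Real.pi) Real.pi, ENNReal.ofReal (2 * Real.pi)⁻¹ *
        g ((a + Real.pi) / (2 * Real.pi)) := by
  have hpi := Real.pi_pos
  have himg : (fun a : ℝ => (a + Real.pi) / (2 * Real.pi)) '' Set.Ioo (-Real.pi) Real.pi =
      Set.Ioo 0 1 := by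
    ext t
    constructor
    · rintro ⟨a, ⟨h1, h2⟩, rfl⟩
      refine ⟨div_pos (by linarith) (by linarith), ?_⟩
      rw [div_lt_one (by linarith)]; linarith
    · rintro ⟨h1, h2⟩
      refine ⟨2 * Real.pi * t - Real.pi, ⟨by nlinarith, by nlinarith⟩, ?_⟩
      simp only
      field_simp
      ring
  have hinj : Set.InjOn (fun a : ℝ => (a + Real.pi) / (2 * Real.pi)) (Set.Ioo (-Real.pi) Real.pi) := by
    intro a _ b _ hab
    simp only at hab
    field_simp at hab
    linarith
  have hder : ∀ a ∈ Set.Ioo (-Real.pi) Real.pi, HasDerivWithinAt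
      (fun a : ℝ => (a + Real.pi) / (2 * Real.pi)) (2 * Real.pi)⁻¹ (Set.Ioo (-Real.pi) Real.pi) a := by
    intro a _
    have := (((hasDerivAt_id a).add_const Real.pi).div_const (2 * Real.pi)).hasDerivWithinAt
      (s := Set.Ioo (-Real.pi) Real.pi)
    simpa [one_div] using this
  have key := lintegral_image_eq_lintegral_abs_deriv_mul measurableSet_Ioo hder hinj g
  rw [himg, abs_of_pos (by positivity)] at key
  rw [← key]
  exact (setLIntegral_congr Ioo_ae_eq_Ico).symm

/-- The Box–Muller map, with `p.1` the radial and `p.2` the angular variable. -/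
def boxMuller (p : ℝ × ℝ) : ℝ × ℝ :=
  (Real.sqrt (2 * p.1) * Real.cos (2 * Real.pi * p.2),
    Real.sqrt (2 * p.1) * Real.sin (2 * Real.pi * p.2))

theorem measurable_boxMuller : Measurable boxMuller := by
  unfold boxMuller
  fun_prop

theorem lintegral_boxMuller (f : ℝ × ℝ → ℝ≥0∞) (hf : Measurable f) :
    ∫⁻ p, f (boxMuller p) ∂((expMeasure 1).prod (volume.restrict (Set.Ico (0 : ℝ) 1))) =
      ∫⁻ p, f p ∂((gaussianReal 0 1).prod (gaussianReal 0 1)) := by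
  have hpi := Real.pi_pos
  have hm := measurable_gaussianPDF 0 1
  have hfb : Measurable fun p => f (boxMuller p) := hf.comp measurable_boxMuller
  -- the angle `2πt = a + π` turns `(cos a, sin a)` into its negative
  have hR : ∫⁻ p, f p ∂((gaussianReal 0 1).prod (gaussianReal 0 1)) =
      ∫⁻ r in Set.Ioi (0 : ℝ), ∫⁻ a in Set.Ioo (-Real.pi) Real.pi, ENNReal.ofReal r *
        ((ENNReal.ofReal (2 * Real.pi)⁻¹ * ENNReal.ofReal (Real.exp (-(r ^ 2 / 2)))) *
          f (-(r * Real.cos a), -(r * Real.sin a))) := by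
    rw [gaussianReal_of_var_ne_zero 0 one_ne_zero, prod_withDensity hm hm,
      lintegral_withDensity_eq_lintegral_mul _ (by fun_prop) hf, ← Measure.volume_eq_prod,
      ← lintegral_neg_eq_self, ← lintegral_comp_polarCoord_symm, polarCoord_target,
      Measure.volume_eq_prod, setLIntegral_prod]
    · refine setLIntegral_congr_fun measurableSet_Ioi fun r hr => ?_
      refine setLIntegral_congr_fun measurableSet_Ioo fun a _ => ?_
      simp only [polarCoord_symm_apply, smul_eq_mul, Pi.mul_apply, Prod.neg_mk]
      congr 2
      rw [gaussianPDF, gaussianPDF, ← ENNReal.ofReal_mul (gaussianPDFReal_nonneg _ _ _),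
        ← ENNReal.ofReal_mul (by positivity)]
      congr 1
      simp only [gaussianPDFReal, NNReal.coe_one, mul_one, sub_zero]
      rw [mul_mul_mul_comm, ← Real.exp_add, ← mul_inv, Real.mul_self_sqrt (by positivity)]
      congr 2
      have := Real.sin_sq_add_cos_sq a
      linear_combination (-(r ^ 2) / 2) * this
    · refine Measurable.aemeasurable ?_
      simp only [polarCoord_symm_apply]
      have h1 : Measurable fun p : ℝ × ℝ => f (-(p.1 * Real.cos p.2, p.1 * Real.sin p.2)) :=
        hf.comp (by fun_prop)
      simp only [Pi.mul_apply, smul_eq_mul, Prod.neg_mk] at h1 ⊢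
      fun_prop
  rw [hR, lintegral_prod _ hfb.aemeasurable, lintegral_expMeasure _ hfb.lintegral_prod_right']
  refine setLIntegral_congr_fun measurableSet_Ioi fun r hr => ?_
  have hr' : (0 : ℝ) < r := hr
  rw [lintegral_unit_angle, ← lintegral_const_mul' _ _ ENNReal.ofReal_ne_top,
    ← lintegral_const_mul' _ _ ENNReal.ofReal_ne_top]
  refine setLIntegral_congr_fun measurableSet_Ioo fun a _ => ?_
  have h1 : 2 * Real.pi * ((a + Real.pi) / (2 * Real.pi)) = a + Real.pi := by field_simp
  have h2 : Real.sqrt (2 * (r ^ 2 / 2)) = r := by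
    rw [show 2 * (r ^ 2 / 2) = r ^ 2 by ring, Real.sqrt_sq hr'.le]
  simp only [boxMuller, h1, h2, Real.cos_add_pi, Real.sin_add_pi, mul_neg]
  ring

theorem measurePreserving_boxMuller : MeasurePreserving boxMuller
    ((expMeasure 1).prod (volume.restrict (Set.Ico (0 : ℝ) 1)))
    ((gaussianReal 0 1).prod (gaussianReal 0 1)) := by
  refine ⟨measurable_boxMuller, ?_⟩
  ext s hs
  rw [← lintegral_indicator_one hs, ← lintegral_indicator_one hs,
    lintegral_map (measurable_one.indicator hs) measurable_boxMuller]
  exact lintegral_boxMuller _ (measurable_one.indicator hs)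

/-! ### The law of the Sibuya map -/

/-- The index `2i + b` of coordinate `b ∈ {0,1}` in the `i`-th pair. -/
def pairEquiv (N : ℕ) : Fin N × Fin 2 ≃ Fin (2 * N) where
  toFun p := ⟨2 * p.1.val + p.2.val, by have := p.1.2; have := p.2.2; omega⟩
  invFun j := (⟨j.val / 2, by have := j.2; omega⟩, ⟨j.val % 2, by omega⟩)
  left_inv p := by
    have := p.2.2
    refine Prod.ext (Fin.ext ?_) (Fin.ext ?_)
    · change (2 * p.1.val + p.2.val) / 2 = p.1.val; omega
    · change (2 * p.1.val + p.2.val) % 2 = p.2.val; omega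
  right_inv j := Fin.ext (by change 2 * (j.val / 2) + j.val % 2 = j.val; omega)

theorem prod_pairs {M : Type*} [CommMonoid M] {N : ℕ} (f : Fin (2 * N) → M) :
    ∏ j, f j = ∏ i : Fin N, f (pairEquiv N (i, 0)) * f (pairEquiv N (i, 1)) := by
  rw [← (pairEquiv N).prod_comp, Fintype.prod_prod_type]
  simp [Fin.prod_univ_two]

/-- List the coordinates of a sequence of `N` points of the plane. -/
def flattenPairs {N : ℕ} (z : Fin N → ℝ × ℝ) : Fin (2 * N) → ℝ := fun j =>
  if j.val % 2 = 0 then (z ((pairEquiv N).symm j).1).1 else (z ((pairEquiv N).symm j).1).2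

theorem flattenPairs_zero {N : ℕ} (z : Fin N → ℝ × ℝ) (i : Fin N) :
    flattenPairs z (pairEquiv N (i, 0)) = (z i).1 := by
  have : (pairEquiv N (i, 0)).val % 2 = 0 := by simp [pairEquiv]
  rw [flattenPairs, if_pos this, Equiv.symm_apply_apply]

theorem flattenPairs_one {N : ℕ} (z : Fin N → ℝ × ℝ) (i : Fin N) :
    flattenPairs z (pairEquiv N (i, 1)) = (z i).2 := by
  have : (pairEquiv N (i, 1)).val % 2 ≠ 0 := by simp [pairEquiv, Nat.add_mod]
  rw [flattenPairs, if_neg this, Equiv.symm_apply_apply]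

theorem measurable_flattenPairs {N : ℕ} :
    Measurable (flattenPairs : (Fin N → ℝ × ℝ) → Fin (2 * N) → ℝ) := by
  refine measurable_pi_lambda _ fun j => ?_
  unfold flattenPairs
  split_ifs
  · exact (measurable_pi_apply _).fst
  · exact (measurable_pi_apply _).snd

theorem forall_pairs {N : ℕ} (P : Fin (2 * N) → Prop) :
    (∀ j, P j) ↔ ∀ i : Fin N, P (pairEquiv N (i, 0)) ∧ P (pairEquiv N (i, 1)) := by
  rw [← (pairEquiv N).forall_congr_right, Prod.forall]
  simp [Fin.forall_fin_two]

theorem measurePreserving_flattenPairs (N : ℕ) : MeasurePreserving (flattenPairs (N := N))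
    (Measure.pi fun _ => (gaussianReal 0 1).prod (gaussianReal 0 1)) (stdGauss (2 * N)) := by
  refine ⟨measurable_flattenPairs, (Measure.pi_eq fun s hs => ?_).symm⟩
  rw [Measure.map_apply measurable_flattenPairs (MeasurableSet.univ_pi hs), prod_pairs]
  have : flattenPairs ⁻¹' (Set.univ.pi s) = Set.univ.pi fun i : Fin N =>
      s (pairEquiv N (i, 0)) ×ˢ s (pairEquiv N (i, 1)) := by
    ext z
    simp only [Set.mem_preimage, Set.mem_univ_pi, Set.mem_prod]
    rw [forall_pairs]
    simp only [flattenPairs_zero, flattenPairs_one]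
  rw [this, Measure.pi_pi]
  simp only [Measure.prod_prod]

theorem measurePreserving_append (a b : ℕ) :
    MeasurePreserving (fun p : (Fin a → ℝ) × (Fin b → ℝ) => Fin.append p.1 p.2)
      ((cubeMeasure a).prod (cubeMeasure b)) (cubeMeasure (a + b)) := by
  have hm : Measurable fun p : (Fin a → ℝ) × (Fin b → ℝ) => Fin.append p.1 p.2 := by
    refine measurable_pi_lambda _ fun j => ?_
    cases j using Fin.addCases with
    | left j => simp only [Fin.append_left]; fun_prop
    | right j => simp only [Fin.append_right]; fun_prop
  refine ⟨hm, (Measure.pi_eq fun s hs => ?_).symm⟩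
  rw [Measure.map_apply hm (MeasurableSet.univ_pi hs), Fin.prod_univ_add]
  have : (fun p : (Fin a → ℝ) × (Fin b → ℝ) => Fin.append p.1 p.2) ⁻¹' (Set.univ.pi s) =
      (Set.univ.pi fun i => s (Fin.castAdd b i)) ×ˢ (Set.univ.pi fun i => s (Fin.natAdd a i)) := by
    ext p
    simp only [Set.mem_preimage, Set.mem_univ_pi, Set.mem_prod]
    constructor
    · intro h
      exact ⟨fun i => by simpa using h (Fin.castAdd b i), fun i => by simpa using h (Fin.natAdd a i)⟩
    · rintro ⟨h1, h2⟩ j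
      cases j using Fin.addCases with
      | left j => simpa using h1 j
      | right j => simpa using h2 j
  rw [this, Measure.prod_prod, cubeMeasure, cubeMeasure, Measure.pi_pi, Measure.pi_pi]

theorem measurePreserving_cast {a b : ℕ} (h : a = b) :
    MeasurePreserving (fun (x : Fin a → ℝ) (k : Fin b) => x (Fin.cast h.symm k))
      (cubeMeasure a) (cubeMeasure b) := by
  subst h
  exact MeasurePreserving.id _

/-- The point of `ℝ^(2N)` with squared radii `s_i` and angles `2π t_i` in the coordinate planes. -/
def polarPoint {N : ℕ} (s t : Fin N → ℝ) : Fin (2 * N) → ℝ :=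
  flattenPairs fun i => (Real.sqrt (s i) * Real.cos (2 * Real.pi * t i),
    Real.sqrt (s i) * Real.sin (2 * Real.pi * t i))

theorem measurable_polarPoint {N : ℕ} :
    Measurable fun p : (Fin N → ℝ) × (Fin N → ℝ) => polarPoint p.1 p.2 := by
  refine measurable_flattenPairs.comp (measurable_pi_lambda _ fun i => ?_)
  fun_prop

theorem sum_sq_polarPoint {N : ℕ} {s : Fin N → ℝ} (hs : ∀ i, 0 ≤ s i) (t : Fin N → ℝ) :
    ∑ j, polarPoint s t j ^ 2 = ∑ i, s i := by
  have := prod_pairs (M := Multiplicative ℝ)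
    (fun j => Multiplicative.ofAdd (polarPoint s t j ^ 2))
  have h2 : ∑ j, polarPoint s t j ^ 2 = ∑ i : Fin N, (polarPoint s t (pairEquiv N (i, 0)) ^ 2 +
    polarPoint s t (pairEquiv N (i, 1)) ^ 2) := this
  rw [h2]
  refine Finset.sum_congr rfl fun i _ => ?_
  simp only [polarPoint, flattenPairs_zero, flattenPairs_one]
  rw [mul_pow, mul_pow, ← mul_add, Real.cos_sq_add_sin_sq, Real.sq_sqrt (hs i), mul_one]

/-- Normalising a point of the coordinate planes turns its squared radii into their proportions. -/
theorem toSphere_polarPoint {N : ℕ} {s : Fin N → ℝ} (hs : ∀ i, 0 ≤ s i) (t : Fin N → ℝ) :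
    toSphere (polarPoint (fun i => 2 * s i) t) = polarPoint ((∑ i, s i)⁻¹ • s) t := by
  unfold toSphere
  rw [sum_sq_polarPoint (fun i => mul_nonneg zero_le_two (hs i)), ← Finset.mul_sum]
  have h2 : Real.sqrt 2 ≠ 0 := by positivity
  have key : ∀ i, (Real.sqrt (2 * ∑ i, s i))⁻¹ * Real.sqrt (2 * s i) =
      Real.sqrt (((∑ i, s i)⁻¹ • s) i) := by
    intro i
    have hS : 0 ≤ ∑ i, s i := Finset.sum_nonneg fun i _ => hs i
    rw [Pi.smul_apply, smul_eq_mul, Real.sqrt_mul (inv_nonneg.2 hS), Real.sqrt_inv,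
      Real.sqrt_mul zero_le_two, Real.sqrt_mul zero_le_two, mul_inv]
    field_simp
  funext j
  simp only [Pi.smul_apply, smul_eq_mul] at key
  simp only [Pi.smul_apply, smul_eq_mul, polarPoint, flattenPairs]
  split_ifs <;> rw [← key, ← mul_assoc]

/-- Sibuya's map, with angles `t` and radial variables `y`, uses the spacings of `y` as squared
radii. -/
theorem sibuya_eq_polarPoint (m : ℕ) (t : Fin (m + 1) → ℝ) (y : Fin m → ℝ)
    (h : m + 1 + m = 2 * (m + 1) - 1) :
    sibuya (m + 1) (fun k => Fin.append t y (Fin.cast h.symm k)) =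
      polarPoint (diffs (Fin.snoc (sorted y) 1 : Fin (m + 1) → ℝ)) t := by
  set x : Fin (2 * (m + 1) - 1) → ℝ := fun k => Fin.append t y (Fin.cast h.symm k) with hx
  have htail : (fun i : Fin (m + 1 - 1) =>
      if h : (m + 1) + i.val < 2 * (m + 1) - 1 then x ⟨(m + 1) + i.val, h⟩ else 0) = y := by
    funext i
    have hi : i.val < m := i.2
    rw [dif_pos (by omega)]
    exact Fin.append_right t y i
  have hys : ∀ k : Fin (m + 2), sibuyaYs (m + 1) x k =
      (Fin.cons 0 (Fin.snoc (sorted y) 1 : Fin (m + 1) → ℝ) : Fin (m + 2) → ℝ) k := by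
    intro k
    unfold sibuyaYs
    rw [htail]
    cases k using Fin.cases with
    | zero => simp
    | succ k =>
      rw [if_neg (by simp), Fin.cons_succ]
      cases k using Fin.lastCases with
      | last => rw [if_pos (by simp), Fin.snoc_last]
      | cast k =>
        have hk := k.2
        rw [if_neg (by simp), Fin.snoc_castSucc]
        rw [dif_pos (by simp)]
        rfl
  funext j
  have hj := j.2
  have hlt : j.val / 2 < m + 1 := by omega
  let i : Fin (m + 1) := ⟨j.val / 2, hlt⟩
  have h1 := hys i.succ
  have h2 := hys i.castSucc
  have h3 : x ⟨j.val / 2, by omega⟩ = t i := Fin.append_left t y i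
  simp only [sibuya]
  rw [dif_pos (by omega), h3, show j.val / 2 + 1 = (i.succ : ℕ) from rfl, h1,
    show sibuyaYs (m + 1) x (j.val / 2) = _ from h2, Fin.cons_succ]
  unfold polarPoint flattenPairs
  split_ifs <;> rfl

theorem measurable_sibuya (m : ℕ) : Measurable (sibuya (m + 1)) := by
  have h : m + 1 + m = 2 * (m + 1) - 1 := by omega
  have hfun : sibuya (m + 1) = fun x : Fin (2 * (m + 1) - 1) → ℝ => polarPoint
      (diffs (Fin.snoc (sorted fun i => x (Fin.cast h (Fin.natAdd (m + 1) i))) 1 : Fin (m + 1) → ℝ))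
      (fun i => x (Fin.cast h (Fin.castAdd m i))) := by
    funext x
    rw [← sibuya_eq_polarPoint m _ _ h]
    congr 1
    funext k
    obtain ⟨k, rfl⟩ : ∃ k', k = Fin.cast h k' := ⟨Fin.cast h.symm k, by simp⟩
    cases k using Fin.addCases <;> simp
  rw [hfun]
  have h0 : Measurable fun (x : Fin (2 * (m + 1) - 1) → ℝ) (i : Fin m) =>
      x (Fin.cast h (Fin.natAdd (m + 1) i)) := by fun_prop
  have h1 : Measurable fun x : Fin (2 * (m + 1) - 1) → ℝ =>
      (diffs (Fin.snoc (sorted fun i => x (Fin.cast h (Fin.natAdd (m + 1) i))) 1 :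
        Fin (m + 1) → ℝ)) :=
    measurable_diffs.comp (measurable_snoc.comp (measurable_const.prodMk
      (measurable_sorted.comp h0)))
  have h2 : Measurable fun (x : Fin (2 * (m + 1) - 1) → ℝ) (i : Fin (m + 1)) =>
      x (Fin.cast h (Fin.castAdd m i)) := by fun_prop
  exact measurable_polarPoint.comp (h1.prodMk h2)

/-- Sibuya's theorem: the map `S` pushes Lebesgue measure on the cube to the uniform measure on the
sphere. -/
theorem lintegral_sibuya (m : ℕ) (F : (Fin (2 * (m + 1)) → ℝ) → ℝ≥0∞) (hF : Measurable F) :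
    ∫⁻ x, F (sibuya (m + 1) x) ∂cubeMeasure (2 * (m + 1) - 1) =
      ∫⁻ g, F (toSphere g) ∂stdGauss (2 * (m + 1)) := by
  have h : m + 1 + m = 2 * (m + 1) - 1 := by omega
  have hFp : Measurable fun p : (Fin (m + 1) → ℝ) × (Fin (m + 1) → ℝ) => F (polarPoint p.1 p.2) :=
    hF.comp measurable_polarPoint
  have hFs : Measurable fun x => F (sibuya (m + 1) x) := hF.comp (measurable_sibuya m)
  have hL : ∫⁻ x, F (sibuya (m + 1) x) ∂cubeMeasure (2 * (m + 1) - 1) =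
      ∫⁻ t, ∫⁻ y, F (polarPoint (diffs (Fin.snoc (sorted y) 1 : Fin (m + 1) → ℝ)) t)
        ∂cubeMeasure m ∂cubeMeasure (m + 1) := by
    rw [← ((measurePreserving_cast h).comp (measurePreserving_append (m + 1) m)).lintegral_comp hFs]
    simp only [Function.comp, sibuya_eq_polarPoint m _ _ h]
    rw [lintegral_prod]
    refine Measurable.aemeasurable (hFp.comp (Measurable.prodMk ?_ measurable_fst))
    exact measurable_diffs.comp (measurable_snoc.comp (measurable_const.prodMk
      (measurable_sorted.comp measurable_snd)))
  have hR : ∫⁻ g, F (toSphere g) ∂stdGauss (2 * (m + 1)) =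
      ∫⁻ t, ∫⁻ s, F (polarPoint ((∑ i, s i)⁻¹ • s) t)
        ∂(Measure.pi fun _ : Fin (m + 1) => expMeasure 1) ∂cubeMeasure (m + 1) := by
    have hFt : Measurable fun g : Fin (2 * (m + 1)) → ℝ => F (toSphere g) :=
      hF.comp measurable_toSphere
    have hbm := measurePreserving_pi (ι := Fin (m + 1)) (fun _ =>
      (expMeasure 1).prod (volume.restrict (Set.Ico (0 : ℝ) 1)))
      (fun _ => (gaussianReal 0 1).prod (gaussianReal 0 1)) fun _ => measurePreserving_boxMuller
    have harr := (measurePreserving_arrowProdEquivProdArrow ℝ ℝ (Fin (m + 1))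
      (fun _ => expMeasure 1) fun _ => volume.restrict (Set.Ico (0 : ℝ) 1)).symm
    rw [← (((measurePreserving_flattenPairs (m + 1)).comp hbm).comp harr).lintegral_comp hFt]
    change ∫⁻ p : (Fin (m + 1) → ℝ) × (Fin (m + 1) → ℝ),
      F (toSphere (polarPoint (fun i => 2 * p.1 i) p.2))
        ∂((Measure.pi fun _ : Fin (m + 1) => expMeasure 1).prod (cubeMeasure (m + 1))) = _
    have hm2 : Measurable fun p : (Fin (m + 1) → ℝ) × (Fin (m + 1) → ℝ) =>
        F (toSphere (polarPoint (fun i => 2 * p.1 i) p.2)) :=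
      hFt.comp (measurable_polarPoint.comp (Measurable.prodMk (by fun_prop) measurable_snd))
    rw [lintegral_prod_symm _ hm2.aemeasurable]
    refine lintegral_congr fun t => lintegral_congr_ae ?_
    have hpos1 : ∀ᵐ s ∂expMeasure 1, 0 ≤ s := by
      change ∀ᵐ s ∂(volume.withDensity (exponentialPDF 1)), 0 ≤ s
      have hpdf : Measurable (exponentialPDF 1) := (measurable_exponentialPDFReal 1).ennreal_ofReal
      rw [ae_withDensity_iff hpdf]
      refine Filter.Eventually.of_forall fun s hs => ?_
      by_contra hneg
      rw [exponentialPDF_eq, if_neg hneg] at hs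
      simp at hs
    have hpos : ∀ᵐ s ∂(Measure.pi fun _ : Fin (m + 1) => expMeasure 1), ∀ i, 0 ≤ s i := by
      rw [ae_all_iff]
      intro i
      exact (Measure.quasiMeasurePreserving_eval (fun _ : Fin (m + 1) => expMeasure 1) i).ae hpos1
    filter_upwards [hpos] with s hs
    simp only [toSphere_polarPoint hs]
  rw [hL, hR]
  refine lintegral_congr fun t => ?_
  exact (lintegral_proportions_eq_spacings m (fun s => F (polarPoint s t))
    (hFp.comp (measurable_id.prodMk measurable_const))).symm

/-! ### The main inequality -/

theorem sum_sq_pos {m : ℕ} {x : Fin m → ℝ} (hx : x ≠ 0) : 0 < ∑ i, x i ^ 2 := by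
  obtain ⟨i, hi⟩ := Function.ne_iff.1 hx
  have : x i ≠ 0 := hi
  exact Finset.sum_pos' (fun j _ => sq_nonneg _) ⟨i, Finset.mem_univ i, by positivity⟩

theorem sum_sq_toSphere {m : ℕ} {x : Fin m → ℝ} (hx : x ≠ 0) : ∑ i, toSphere x i ^ 2 = 1 := by
  have h := sum_sq_pos hx
  simp only [toSphere, Pi.smul_apply, smul_eq_mul, mul_pow]
  rw [← Finset.mul_sum, inv_pow, Real.sq_sqrt h.le, inv_mul_cancel₀ h.ne']

theorem toSphere_invariant {m : ℕ} {β : Type*} (φ : (Fin m → ℝ) → β)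
    (hφ : ∀ c : ℝ, 0 < c → ∀ x, φ (c • x) = φ x) (x : Fin m → ℝ) : φ (toSphere x) = φ x := by
  by_cases hx : x = 0
  · subst hx
    simp [toSphere]
  · exact hφ _ (inv_pos.2 (Real.sqrt_pos.2 (sum_sq_pos hx))) x

theorem truncCube_ne_zero {n Q : ℕ} {u : Fin (n + 1) → ℝ} (hu : u ≠ 0) : truncCube Q u ≠ 0 := by
  obtain ⟨i, hi⟩ := exists_faceIdxN_eq (nuInf u)
  have h1 := ((faceIdxN_eq_iff _ _).1 hi).1
  rw [normInf_nuInf hu] at h1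
  intro h
  have h2 := congrFun h i
  rw [truncCube, if_pos hi.symm] at h2
  rw [h2] at h1
  simp at h1

theorem ae_stdGauss_ne_zero (n : ℕ) : ∀ᵐ g ∂stdGauss (n + 1), g ≠ 0 := by
  have := nullSingletonClass_gaussianReal (μ := 0) (v := 1) one_ne_zero
  have h : ∀ᵐ g ∂stdGauss (n + 1), g 0 ≠ 0 :=
    Measure.ae_eval_ne (fun _ : Fin (n + 1) => gaussianReal 0 1) 0 (0 : ℝ)
  filter_upwards [h] with g hg h0
  exact hg (by rw [h0]; rfl)

theorem uniformSphere_eq (N : ℕ) : uniformSphere N = (stdGauss (2 * N)).map toSphere := rfl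

theorem ae_uniformSphere (m : ℕ) : ∀ᵐ u ∂uniformSphere (m + 1), ∑ i, u i ^ 2 = 1 := by
  rw [uniformSphere_eq, ae_map_iff measurable_toSphere.aemeasurable
    (measurableSet_eq_fun (by fun_prop) measurable_const)]
  filter_upwards [ae_stdGauss_ne_zero (2 * m + 1)] with g hg
  exact sum_sq_toSphere hg

/-- The averaged inequality for a kernel that is measurable on the whole space. -/
theorem lintegral_trunc_frac_le (m Q : ℕ) (hQ : 1 ≤ Q)
    (T : (Fin (2 * (m + 1)) → ℝ) → (Fin (2 * (m + 1)) → ℝ) → ℝ≥0∞)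
    (hT : Measurable (Function.uncurry T)) :
    ∫⁻ u, T (truncSphere (m + 1) Q u) (fracSphere (m + 1) Q u) ∂uniformSphere (m + 1) ≤
      ENNReal.ofReal (Real.exp (2 * ((m + 1 : ℕ) : ℝ) ^ (3 / 2 : ℝ) / Q)) *
        ∫⁻ u, ∫⁻ v, T (truncSphere (m + 1) Q u) v
          ∂uniformSphere (m + 1) ∂uniformSphere (m + 1) := by
  have htr : Measurable (truncSphere (m + 1) Q) :=
    measurable_toSphere.comp (measurable_truncCube (n := 2 * m + 1) Q)
  have hfr : Measurable (fracSphere (m + 1) Q) :=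
    (measurable_sibuya m).comp (measurable_digits (n := 2 * m + 1) Q)
  have hscale_t : ∀ g, truncSphere (m + 1) Q (toSphere g) = truncSphere (m + 1) Q g :=
    toSphere_invariant _ fun c hc x => by
      rw [truncSphere_eq, truncSphere_eq]
      exact congrArg toSphere (truncCube_smul (n := 2 * m + 1) hc x)
  have hscale_f : ∀ g, fracSphere (m + 1) Q (toSphere g) = fracSphere (m + 1) Q g :=
    toSphere_invariant _ fun c hc x => by
      rw [fracSphere_eq, fracSphere_eq]
      exact congrArg (sibuya (m + 1)) (digits_smul (n := 2 * m + 1) hc x)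
  have hTa : ∀ a, Measurable (T a) := fun a => hT.comp (measurable_const.prodMk measurable_id)
  have hTi : Measurable fun a => ∫⁻ v, T a v ∂uniformSphere (m + 1) := by
    have : IsProbabilityMeasure (uniformSphere (m + 1)) := by
      rw [uniformSphere_eq]
      exact Measure.isProbabilityMeasure_map measurable_toSphere.aemeasurable
    exact hT.lintegral_prod_right'
  have hinner : ∀ a, ∫⁻ v, T a v ∂uniformSphere (m + 1) =
      ∫⁻ y, T a (sibuya (m + 1) y) ∂cubeMeasure (2 * (m + 1) - 1) := by
    intro a
    rw [lintegral_sibuya m (T a) (hTa a), uniformSphere_eq,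
      lintegral_map (hTa a) measurable_toSphere]
  have hL : Measurable fun u => T (truncSphere (m + 1) Q u) (fracSphere (m + 1) Q u) :=
    hT.comp (htr.prodMk hfr)
  have hR : Measurable fun u => ∫⁻ v, T (truncSphere (m + 1) Q u) v ∂uniformSphere (m + 1) :=
    hTi.comp htr
  have hpush : ∀ f : (Fin (2 * (m + 1)) → ℝ) → ℝ≥0∞, Measurable f →
      ∫⁻ u, f u ∂uniformSphere (m + 1) = ∫⁻ g, f (toSphere g) ∂stdGauss (2 * (m + 1)) :=
    fun f hf => lintegral_map hf measurable_toSphere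
  rw [hpush _ hL, hpush _ hR]
  simp only [hscale_t, hscale_f, hinner]
  exact lintegral_truncCube_digits_le (n := 2 * m + 1) hQ _
    (fun w w' h => coneDensity_osc (N := m + 1) (by omega) hQ h)
    (fun a y => T (toSphere a) (sibuya (m + 1) y))
    (hT.comp ((measurable_toSphere.comp measurable_fst).prodMk
      ((measurable_sibuya m).comp measurable_snd)))

/-- Duplication of the uniform distribution on the sphere: `⌊u⌋_Q` is within geodesic
distance `3√N/Q` of `u`, and `{u}_Q` is nearly uniform and nearly independent of `⌊u⌋_Q`. -/
theorem truncation_fractional_sphere (N Q : ℕ) (hN : 1 ≤ N) (hQ : 1 ≤ Q)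
    (Θ : (Fin (2 * N) → ℝ) → (Fin (2 * N) → ℝ) → ℝ)
    (hΘcont : ContinuousOn (fun p : (Fin (2 * N) → ℝ) × (Fin (2 * N) → ℝ) => Θ p.1 p.2)
      ({x | ∑ i, x i ^ 2 = 1} ×ˢ {x | ∑ i, x i ^ 2 = 1}))
    (hΘnonneg : ∀ x ∈ {x : Fin (2 * N) → ℝ | ∑ i, x i ^ 2 = 1},
      ∀ y ∈ {x : Fin (2 * N) → ℝ | ∑ i, x i ^ 2 = 1}, 0 ≤ Θ x y) :
    (∀ u : Fin (2 * N) → ℝ, ∑ i, u i ^ 2 = 1 →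
        dSph (truncSphere N Q u) u ≤ 3 * Real.sqrt N / Q) ∧
      ∫⁻ u, ENNReal.ofReal (Θ (truncSphere N Q u) (fracSphere N Q u)) ∂uniformSphere N
        ≤ ENNReal.ofReal (Real.exp (2 * (N : ℝ) ^ (3 / 2 : ℝ) / Q)) *
          ∫⁻ u, ∫⁻ v, ENNReal.ofReal (Θ (truncSphere N Q u) v)
            ∂uniformSphere N ∂uniformSphere N := by
  refine ⟨fun u hu => dSph_truncSphere_le N Q hN hQ u hu, ?_⟩
  obtain ⟨m, rfl⟩ : ∃ m, N = m + 1 := ⟨N - 1, by omega⟩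
  classical
  -- `Θ` is only controlled on the sphere; off it, the value `∞` keeps measurability and an upper
  -- bound for the left-hand side
  let S : Set (Fin (2 * (m + 1)) → ℝ) := {x | ∑ i, x i ^ 2 = 1}
  have hS : MeasurableSet S := measurableSet_eq_fun (by fun_prop) measurable_const
  let T : (Fin (2 * (m + 1)) → ℝ) → (Fin (2 * (m + 1)) → ℝ) → ℝ≥0∞ := fun a b =>
    (S ×ˢ S).piecewise (fun p => ENNReal.ofReal (Θ p.1 p.2)) (fun _ => ∞) (a, b)
  have hT : Measurable (Function.uncurry T) :=
    ContinuousOn.measurable_piecewise (ENNReal.continuous_ofReal.comp_continuousOn hΘcont)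
      continuousOn_const (hS.prod hS)
  have hTeq : ∀ a ∈ S, ∀ b ∈ S, T a b = ENNReal.ofReal (Θ a b) := fun a ha b hb =>
    Set.piecewise_eq_of_mem _ _ _ (Set.mk_mem_prod ha hb)
  have hle : ∀ a b, ENNReal.ofReal (Θ a b) ≤ T a b := by
    intro a b
    by_cases h : (a, b) ∈ S ×ˢ S
    · exact (hTeq a h.1 b h.2).ge
    · have htop : T a b = ∞ := Set.piecewise_eq_of_notMem _ _ _ h
      rw [htop]
      exact le_top
  calc ∫⁻ u, ENNReal.ofReal (Θ (truncSphere (m + 1) Q u) (fracSphere (m + 1) Q u))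
        ∂uniformSphere (m + 1)
      ≤ ∫⁻ u, T (truncSphere (m + 1) Q u) (fracSphere (m + 1) Q u) ∂uniformSphere (m + 1) :=
        lintegral_mono fun u => hle _ _
    _ ≤ _ := lintegral_trunc_frac_le m Q hQ T hT
    _ = _ := by
      congr 1
      refine lintegral_congr_ae ?_
      filter_upwards [ae_uniformSphere m] with u hu
      have hu0 : u ≠ 0 := by
        rintro rfl
        simp at hu
      have htr : truncSphere (m + 1) Q u ∈ S := by
        rw [truncSphere_eq]
        exact sum_sq_toSphere (truncCube_ne_zero (n := 2 * m + 1) hu0)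
      refine lintegral_congr_ae ?_
      filter_upwards [ae_uniformSphere m] with v hv
      exact hTeq _ htr v hv
end
end

section
/- Let f, f', g ∈ S(ℋ) with d_S(f,g) ≤ π/2, g ≠ −f and g ≠ −f'. Then for every t ∈ [0,1], d_S(Γ(g,f,t), Γ(g,f',t)) ≤ 2 d_S(f,f'). -/
/-!
Write `α = d_S(f,g)`, `β = d_S(f',g)`, `γ = d_S(f,f')`. The two geodesics issued from `g` are
`cos (tα) g + sin (tα) u` and `cos (tβ) g + sin (tβ) v` with `u, v ⊥ g`, so with `k = Re ⟪u, v⟫`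
(the cosine of the angle at `g`) the cosine of the distance at time `t` is
`X t = cos (tα) cos (tβ) + sin (tα) sin (tβ) k = cos (t(α - β)) - sin (tα) sin (tβ) (1 - k)`,
and `X 1 = cos γ`. If `γ ≥ π/2` there is nothing to prove, so let `cos γ > 0`.

* If `β ≤ π/2`, then `sin (tα) ≤ sin α` and `sin (tβ) ≤ sin β`, whence `X t ≥ cos γ`.
* If `β > π/2`, then `cos α cos β ≤ 0`, so `cos γ ≤ sin α sin β k ≤ k`; combined with
  `cos (t(α - β)) ≥ cos (α - β) ≥ cos γ` this gives `X t ≥ 2 cos γ - 1`.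

In both cases `X t ≥ 2 cos² γ - 1 = cos 2γ`.
-/


open scoped RealInnerProductSpace

noncomputable section

variable {E : Type*} [NormedAddCommGroup E] [InnerProductSpace ℂ E]

/-- Geodesic (angular) distance on the unit sphere of a complex Hermitian space:
`cos (dS x y) = Re ⟪x, y⟫`. -/
def sphDist (x y : E) : ℝ := Real.arccos (inner (𝕜 := ℂ) x y).re

/-- The geodesic path `Γ(g,f,t)` from `g` to `f` on the unit sphere, where
`α = d_S(f,g)`; it is constantly `g` when `α = 0`. -/
def sphGeodesic (g f : E) (t : ℝ) : E :=
  if sphDist f g = 0 then g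
  else (Real.sin ((1 - t) * sphDist f g) / Real.sin (sphDist f g)) • g
    + (Real.sin (t * sphDist f g) / Real.sin (sphDist f g)) • f

-- The real inner product `Re ⟪x, y⟫` underlying the Hermitian one; its scalar action is the
-- restriction of scalars used in `sphGeodesic`.
attribute [local instance] InnerProductSpace.complexToReal

lemma sphDist_eq_arccos_real_inner (x y : E) : sphDist x y = Real.arccos ⟪x, y⟫ := rfl

/-- Polar form of the geodesic from `g` to `f`. The direction `u` is a unit vector when `f ≠ g`;
for `f = g` it is `0`, which is why only `‖u‖ ≤ 1` is recorded. -/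
lemma exists_sphGeodesic_polar (f g : E) (hf : ‖f‖ = 1) (hg : ‖g‖ = 1) (h : g ≠ -f) :
    ∃ u : E, ‖u‖ ≤ 1 ∧ ⟪g, u⟫ = 0 ∧
      f = Real.cos (sphDist f g) • g + Real.sin (sphDist f g) • u ∧
      ∀ t : ℝ, sphGeodesic g f t =
        Real.cos (t * sphDist f g) • g + Real.sin (t * sphDist f g) • u := by
  have hle : |⟪f, g⟫| ≤ 1 := by simpa [hf, hg] using abs_real_inner_le_norm f g
  obtain ⟨hm, hM⟩ := abs_le.1 hle
  have hcos : Real.cos (sphDist f g) = ⟪f, g⟫ := by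
    rw [sphDist_eq_arccos_real_inner, Real.cos_arccos hm hM]
  have hgg : ⟪g, g⟫ = 1 := by rw [real_inner_self_eq_norm_sq, hg]; norm_num
  have hff : ⟪f, f⟫ = 1 := by rw [real_inner_self_eq_norm_sq, hf]; norm_num
  by_cases h0 : sphDist f g = 0
  · have hfg : f = g := by
      rw [h0, Real.cos_zero] at hcos
      exact (inner_eq_one_iff_of_norm_eq_one hf hg).1 hcos.symm
    refine ⟨0, by simp, by simp, by rw [h0]; simpa using hfg, fun t => ?_⟩
    simp [sphGeodesic, h0]
  · have hpos : 0 < sphDist f g := lt_of_le_of_ne (Real.arccos_nonneg _) (Ne.symm h0)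
    have hlt : sphDist f g < Real.pi := by
      refine lt_of_le_of_ne (Real.arccos_le_pi _) fun hpi => h ?_
      rw [hpi, Real.cos_pi] at hcos
      have h1 : ⟪-f, g⟫ = 1 := by rw [inner_neg_left]; linarith
      exact ((inner_eq_one_iff_of_norm_eq_one (by simpa using hf) hg).1 h1).symm
    have hs : 0 < Real.sin (sphDist f g) := Real.sin_pos_of_pos_of_lt_pi hpos hlt
    generalize hα : sphDist f g = α at *
    have hsq := Real.sin_sq_add_cos_sq α
    have hperp : ⟪f - Real.cos α • g, f - Real.cos α • g⟫ = Real.sin α ^ 2 := by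
      simp only [inner_sub_left, inner_sub_right, real_inner_smul_left, real_inner_smul_right,
        hff, hgg, real_inner_comm f g, ← hcos]
      linarith
    refine ⟨(Real.sin α)⁻¹ • (f - Real.cos α • g), ?_, ?_, ?_, fun t => ?_⟩
    · rw [real_inner_self_eq_norm_sq] at hperp
      have : ‖f - Real.cos α • g‖ = Real.sin α :=
        (pow_left_inj₀ (norm_nonneg _) hs.le two_ne_zero).1 hperp
      rw [norm_smul, this, norm_inv, Real.norm_of_nonneg hs.le, inv_mul_cancel₀ hs.ne']
    · rw [real_inner_smul_right, inner_sub_right, real_inner_smul_right, hgg,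
        real_inner_comm, ← hcos]
      ring
    · rw [smul_inv_smul₀ hs.ne']
      abel
    · have he : Real.sin ((1 - t) * α)
          = Real.sin α * Real.cos (t * α) - Real.cos α * Real.sin (t * α) := by
        rw [← Real.sin_sub]; ring_nf
      simp only [sphGeodesic, hα, h0, if_false]
      rw [he]
      match_scalars <;> field_simp <;> ring

/-- The inequality between spherical triangles, in terms of cosines: `cos γ` is `c`, and `k` is the
cosine of the angle between the two geodesics. -/
lemma two_mul_sq_sub_one_le_of_triangle {α β k c t : ℝ} (hα0 : 0 ≤ α) (hα : α ≤ Real.pi / 2)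
    (hβ0 : 0 ≤ β) (hβ : β ≤ Real.pi) (hk1 : k ≤ 1) (ht0 : 0 ≤ t) (ht1 : t ≤ 1)
    (hc : c = Real.cos α * Real.cos β + Real.sin α * Real.sin β * k) (hc0 : 0 < c) (hc1 : c ≤ 1) :
    2 * c ^ 2 - 1 ≤
      Real.cos (t * α) * Real.cos (t * β) + Real.sin (t * α) * Real.sin (t * β) * k := by
  have hpi := Real.pi_pos
  have htα0 : 0 ≤ t * α := mul_nonneg ht0 hα0
  have htβ0 : 0 ≤ t * β := mul_nonneg ht0 hβ0
  have htα : t * α ≤ α := mul_le_of_le_one_left hα0 ht1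
  have htβ : t * β ≤ β := mul_le_of_le_one_left hβ0 ht1
  have hsα : 0 ≤ Real.sin α := Real.sin_nonneg_of_nonneg_of_le_pi hα0 (by linarith)
  have hsβ : 0 ≤ Real.sin β := Real.sin_nonneg_of_nonneg_of_le_pi hβ0 hβ
  have hstα : 0 ≤ Real.sin (t * α) := Real.sin_nonneg_of_nonneg_of_le_pi htα0 (by linarith)
  have hstβ : 0 ≤ Real.sin (t * β) := Real.sin_nonneg_of_nonneg_of_le_pi htβ0 (by linarith)
  have hd : Real.cos (α - β) ≤ Real.cos (t * α - t * β) := by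
    rw [← Real.cos_abs (α - β), ← Real.cos_abs (t * α - t * β)]
    apply Real.cos_le_cos_of_nonneg_of_le_pi (abs_nonneg _)
    · rw [abs_le]; constructor <;> linarith
    · rw [← mul_sub, abs_mul, abs_of_nonneg ht0]
      exact mul_le_of_le_one_left (abs_nonneg _) ht1
  rw [Real.cos_sub, Real.cos_sub] at hd
  rcases le_or_gt β (Real.pi / 2) with hb | hb
  · have h1 : Real.sin (t * α) ≤ Real.sin α :=
      Real.sin_le_sin_of_le_of_le_pi_div_two (by linarith) hα htα
    have h2 : Real.sin (t * β) ≤ Real.sin β :=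
      Real.sin_le_sin_of_le_of_le_pi_div_two (by linarith) hb htβ
    have h3 := mul_le_mul h1 h2 hstβ hsα
    have h4 := mul_le_mul_of_nonneg_right h3 (sub_nonneg.2 hk1)
    nlinarith
  · have hcα : 0 ≤ Real.cos α := Real.cos_nonneg_of_neg_pi_div_two_le_of_le (by linarith) hα
    have hcβ : Real.cos β ≤ 0 := Real.cos_nonpos_of_pi_div_two_le_of_le hb.le (by linarith)
    have hcc : Real.cos α * Real.cos β ≤ 0 := mul_nonpos_of_nonneg_of_nonpos hcα hcβ
    have hss0 : 0 ≤ Real.sin α * Real.sin β := mul_nonneg hsα hsβ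
    have hss : Real.sin α * Real.sin β ≤ 1 :=
      mul_le_one₀ (Real.sin_le_one _) hsβ (Real.sin_le_one _)
    have hst : Real.sin (t * α) * Real.sin (t * β) ≤ 1 :=
      mul_le_one₀ (Real.sin_le_one _) hstβ (Real.sin_le_one _)
    have hk0 : 0 ≤ k := by
      by_contra! hk
      nlinarith
    have hck : c ≤ k := by nlinarith
    have h4 := mul_le_mul_of_nonneg_right hst (sub_nonneg.2 hk1)
    have h5 := mul_nonneg hss0 (sub_nonneg.2 hk1)
    nlinarith

/-- If `f, f', g` are unit vectors with `d_S(f,g) ≤ π/2`, `g ≠ −f`, `g ≠ −f'`, then for all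
`t ∈ [0,1]`, `d_S(Γ(g,f,t), Γ(g,f',t)) ≤ 2 d_S(f,f')`. -/
theorem sphDist_geodesic_le (f f' g : E) (hf : ‖f‖ = 1) (hf' : ‖f'‖ = 1) (hg : ‖g‖ = 1)
    (hfg : sphDist f g ≤ Real.pi / 2) (h1 : g ≠ -f) (h2 : g ≠ -f')
    (t : ℝ) (ht : t ∈ Set.Icc (0 : ℝ) 1) :
    sphDist (sphGeodesic g f t) (sphGeodesic g f' t) ≤ 2 * sphDist f f' := by
  obtain ⟨u, hu, hgu, hfu, hΓ⟩ := exists_sphGeodesic_polar f g hf hg h1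
  obtain ⟨v, hv, hgv, hfv, hΓ'⟩ := exists_sphGeodesic_polar f' g hf' hg h2
  have hgg : ⟪g, g⟫ = 1 := by rw [real_inner_self_eq_norm_sq, hg]; norm_num
  have hug : ⟪u, g⟫ = 0 := by rw [real_inner_comm, hgu]
  have key : ∀ a b x y : ℝ, ⟪a • g + x • u, b • g + y • v⟫ = a * b + x * y * ⟪u, v⟫ := by
    intro a b x y
    simp only [inner_add_left, inner_add_right, real_inner_smul_left, real_inner_smul_right,
      hgg, hug, hgv]
    ring
  have hc : ⟪f, f'⟫ = Real.cos (sphDist f g) * Real.cos (sphDist f' g)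
      + Real.sin (sphDist f g) * Real.sin (sphDist f' g) * ⟪u, v⟫ := by
    rw [← key, ← hfu, ← hfv]
  have hk : ⟪u, v⟫ ≤ 1 :=
    (real_inner_le_norm u v).trans (mul_le_one₀ hu (norm_nonneg _) hv)
  have hc1 : ⟪f, f'⟫ ≤ 1 := by simpa [hf, hf'] using real_inner_le_norm f f'
  rw [sphDist_eq_arccos_real_inner, sphDist_eq_arccos_real_inner f f']
  rcases le_or_gt ⟪f, f'⟫ 0 with h0 | h0
  · have := Real.arccos_le_pi ⟪sphGeodesic g f t, sphGeodesic g f' t⟫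
    have h3 : Real.pi / 2 ≤ Real.arccos ⟪f, f'⟫ := by
      rw [← Real.arccos_zero]
      exact Real.arccos_le_arccos h0
    linarith
  · have hγ : Real.arccos ⟪f, f'⟫ ≤ Real.pi / 2 := Real.arccos_le_pi_div_two.2 h0.le
    have hγ0 := Real.arccos_nonneg ⟪f, f'⟫
    rw [← Real.arccos_cos (x := 2 * Real.arccos ⟪f, f'⟫) (by linarith) (by linarith)]
    apply Real.arccos_le_arccos
    rw [Real.cos_two_mul, Real.cos_arccos (by linarith) hc1, hΓ, hΓ', key]
    exact two_mul_sq_sub_one_le_of_triangle (Real.arccos_nonneg _) hfg (Real.arccos_nonneg _)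
      (Real.arccos_le_pi _) hk ht.1 ht.2 hc h0 hc1
end
end
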